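/- arXiv:quant-ph/0606225 — 2 statements merged into one kernel-verified Lean document; each statement's English description precedes it below -/
import Mathlib

section
/- Let ψ^{AR} be a density operator on A⊗R with A = A₁⊗A₂. Then ∫_{U(A)} ‖ σ^{A₂R}(U) − σ^{A₂}(U) ⊗ σ^R(U) ‖₁² dU ≤ (d_A d_R / d_{A₁}²) ( Tr[(ψ^{AR})²] + Tr[(ψ^A)²] Tr[(ψ^R)²] ). -/
open Matrix MeasureTheory
open scoped Kronecker ComplexOrder

/-- The positive semidefinite square root of a positive semidefinite matrix (Mathlib's former
`Matrix.PosSemidef.sqrt`). -/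
noncomputable def Matrix.PosSemidef.sqrt {n 𝕜 : Type*} [Fintype n] [RCLike 𝕜] [DecidableEq n]
    {A : Matrix n n 𝕜} (hA : A.PosSemidef) : Matrix n n 𝕜 :=
  hA.1.eigenvectorUnitary.1 * diagonal ((↑) ∘ Real.sqrt ∘ hA.1.eigenvalues) *
    (star hA.1.eigenvectorUnitary : Matrix n n 𝕜)

/-- Trace norm `‖M‖₁ = Tr √(Mᴴ M)` of a complex square matrix. -/
noncomputable def traceNorm {n : Type*} [Fintype n] [DecidableEq n] (M : Matrix n n ℂ) : ℝ :=
  ((Matrix.posSemidef_conjTranspose_mul_self M).sqrt.trace).re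

noncomputable instance matMeas {m n : Type*} : MeasurableSpace (Matrix m n ℂ) :=
  (inferInstance : MeasurableSpace (m → n → ℂ))

/-- `σ^{A₂R}(U) = Tr_{A₁}[(U ⊗ I_R) ψ (U ⊗ I_R)ᴴ]`. -/
noncomputable def sigmaA2R {ιA₁ ιA₂ ιR : Type} [Fintype ιA₁] [Fintype ιA₂] [Fintype ιR]
    [DecidableEq ιR]
    (ψ : Matrix ((ιA₁ × ιA₂) × ιR) ((ιA₁ × ιA₂) × ιR) ℂ)
    (U : Matrix (ιA₁ × ιA₂) (ιA₁ × ιA₂) ℂ) : Matrix (ιA₂ × ιR) (ιA₂ × ιR) ℂ :=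
  Matrix.of fun i j => ∑ a₁ : ιA₁,
    ((U ⊗ₖ (1 : Matrix ιR ιR ℂ)) * ψ * (U ⊗ₖ (1 : Matrix ιR ιR ℂ))ᴴ)
      ((a₁, i.1), i.2) ((a₁, j.1), j.2)

/-- Partial trace over the first tensor factor. -/
noncomputable def ptrFst {α β : Type*} [Fintype α] (M : Matrix (α × β) (α × β) ℂ) :
    Matrix β β ℂ :=
  Matrix.of fun i j => ∑ a : α, M (a, i) (a, j)

/-- Partial trace over the second tensor factor. -/
noncomputable def ptrSnd {α β : Type*} [Fintype β] (M : Matrix (α × β) (α × β) ℂ) :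
    Matrix α α ℂ :=
  Matrix.of fun i j => ∑ b : β, M (i, b) (j, b)

/-!
Write `Z = ψ - ψᴬ ⊗ ψᴿ`, so that `σ^{A₂R}(U) - σ^{A₂}(U) ⊗ σᴿ(U)` is obtained from `Z` exactly as
`σ^{A₂R}(U)` is obtained from `ψ`. By Cauchy-Schwarz on the singular values it is enough to average
the squared Hilbert-Schmidt norm, and this can be done separately for each block of `Z` with respect
to a basis of `R`. These blocks are traceless because `Tr_A Z = 0`.

For a single block `X`, the second moment `Y ↦ 𝔼 ⟪U X U⋆, Y⟫ U X U⋆` commutes with conjugation by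
unitaries, hence has the form `Y ↦ α Y + β (tr Y) 1`. The traces of this map and of its composition
with `Y ↦ (tr Y) 1` determine `α` and `β` from `‖X‖` and `tr X`, and its composition with
`Tr_{A₁}† ∘ Tr_{A₁}` has trace `𝔼 ‖Tr_{A₁} (U X U⋆)‖²`.
-/

open scoped Matrix.Norms.Frobenius

section FrobeniusNorm

variable {m n : Type*} [Fintype m] [Fintype n]

theorem frobenius_norm_sq {α : Type*} [SeminormedAddCommGroup α] (A : Matrix m n α) :
    ‖A‖ ^ 2 = ∑ i, ∑ j, ‖A i j‖ ^ 2 := by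
  have hsum : 0 ≤ ∑ i, ∑ j, ‖A i j‖ ^ 2 := by positivity
  simp only [frobenius_norm_def, Real.rpow_two, ← Real.sqrt_eq_rpow, Real.sq_sqrt hsum]

theorem trace_conjTranspose_mul_self_eq_norm_sq {𝕜 : Type*} [RCLike 𝕜] (A : Matrix m n 𝕜) :
    (Aᴴ * A).trace = (‖A‖ : 𝕜) ^ 2 := by
  rw [← RCLike.ofReal_pow, frobenius_norm_sq, Finset.sum_comm]
  simp [trace, mul_apply, RCLike.conj_mul]

theorem trace_mul_self_eq_norm_sq_of_isHermitian {𝕜 : Type*} [RCLike 𝕜]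
    {A : Matrix n n 𝕜} (hA : A.IsHermitian) : (A * A).trace = (‖A‖ : 𝕜) ^ 2 := by
  rw [← trace_conjTranspose_mul_self_eq_norm_sq, hA.eq]

theorem trace_mul_nonneg_of_posSemidef {𝕜 : Type*} [RCLike 𝕜] {P Q : Matrix n n 𝕜}
    (hP : P.PosSemidef) (hQ : Q.PosSemidef) : 0 ≤ (P * Q).trace := by
  -- The trace of `P * Q` is the sum of the entries of the Schur product `P ⊙ Qᵀ`.
  have entry_sum_nonneg := (hP.hadamard hQ.transpose).dotProduct_mulVec_nonneg 1
  rw [← transpose_transpose Q, ← sum_hadamard_eq]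
  simpa [one_dotProduct, mulVec, dotProduct_one] using entry_sum_nonneg

theorem norm_sub_sq_le_of_posSemidef {P Q : Matrix n n ℂ}
    (hP : P.PosSemidef) (hQ : Q.PosSemidef) :
    ‖P - Q‖ ^ 2 ≤ (P * P).trace.re + (Q * Q).trace.re := by
  have cross_nonneg : 0 ≤ (P * Q).trace.re :=
    (Complex.le_def.mp (trace_mul_nonneg_of_posSemidef hP hQ)).1
  have norm_sq_eq : ‖P - Q‖ ^ 2 = ((P - Q) * (P - Q)).trace.re := by
    rw [trace_mul_self_eq_norm_sq_of_isHermitian (hP.1.sub hQ.1)]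
    norm_cast
  rw [norm_sq_eq, Matrix.sub_mul, Matrix.mul_sub, Matrix.mul_sub]
  simp only [trace_sub, Complex.sub_re, trace_mul_comm Q P]
  linarith

theorem trace_kronecker_mul_self_re {A : Matrix m m ℂ}
    (hA : A.IsHermitian) (B : Matrix n n ℂ) :
    ((A ⊗ₖ B) * (A ⊗ₖ B)).trace.re = (A * A).trace.re * (B * B).trace.re := by
  rw [← mul_kronecker_mul, trace_kronecker, trace_mul_self_eq_norm_sq_of_isHermitian hA,
    RCLike.ofReal_eq_complex_ofReal]
  norm_cast
  rw [Complex.re_ofReal_mul]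

theorem traceNorm_eq_sum_sqrt_eigenvalues [DecidableEq n] (M : Matrix n n ℂ) :
    traceNorm M = ∑ i, √((posSemidef_conjTranspose_mul_self M).1.eigenvalues i) := by
  rw [traceNorm, PosSemidef.sqrt, trace_mul_cycle]
  simp [trace]

theorem traceNorm_sq_le_card_mul_norm_sq [DecidableEq n] (M : Matrix n n ℂ) :
    traceNorm M ^ 2 ≤ Fintype.card n * ‖M‖ ^ 2 := by
  have hM := posSemidef_conjTranspose_mul_self M
  have sum_eigenvalues : ∑ i, hM.1.eigenvalues i = ‖M‖ ^ 2 := by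
    have htrace := hM.1.trace_eq_sum_eigenvalues
    rw [trace_conjTranspose_mul_self_eq_norm_sq] at htrace
    exact_mod_cast htrace.symm
  calc traceNorm M ^ 2
      ≤ Fintype.card n * ∑ i, √(hM.1.eigenvalues i) ^ 2 := by
        rw [traceNorm_eq_sum_sqrt_eigenvalues]
        exact sq_sum_le_card_mul_sum_sq
    _ = Fintype.card n * ‖M‖ ^ 2 := by
        simp only [Real.sq_sqrt (hM.eigenvalues_nonneg _), sum_eigenvalues]

end FrobeniusNorm

section UnitaryConjugation

open Unitary

variable {n : Type*} [Fintype n] [DecidableEq n]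

theorem trace_conjStarAlgAut {R : Type*} [CommRing R] [StarRing R] (U : unitaryGroup n R)
    (X : Matrix n n R) : (conjStarAlgAut R _ U X).trace = X.trace := by
  rw [conjStarAlgAut_apply, trace_mul_cycle, coe_star_mul_self, one_mul]

theorem conjStarAlgAut_conjTranspose_mul {R : Type*} [CommRing R] [StarRing R]
    (U : unitaryGroup n R) (X Y : Matrix n n R) :
    (conjStarAlgAut R _ U X)ᴴ * conjStarAlgAut R _ U Y = conjStarAlgAut R _ U (Xᴴ * Y) := by
  rw [← star_eq_conjTranspose, ← star_eq_conjTranspose, map_mul, map_star]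

theorem frobenius_norm_conjStarAlgAut {𝕜 : Type*} [RCLike 𝕜] (U : unitaryGroup n 𝕜)
    (X : Matrix n n 𝕜) : ‖conjStarAlgAut 𝕜 _ U X‖ = ‖X‖ := by
  rw [← sq_eq_sq₀ (norm_nonneg _) (norm_nonneg _)]
  apply RCLike.ofReal_injective (K := 𝕜)
  push_cast
  rw [← trace_conjTranspose_mul_self_eq_norm_sq, conjStarAlgAut_conjTranspose_mul,
    trace_conjStarAlgAut, trace_conjTranspose_mul_self_eq_norm_sq]

@[fun_prop]
theorem continuous_conjStarAlgAut {𝕜 : Type*} [RCLike 𝕜] (X : Matrix n n 𝕜) :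
    Continuous fun U : unitaryGroup n 𝕜 => conjStarAlgAut 𝕜 _ U X := by
  simp only [conjStarAlgAut_apply]
  fun_prop

instance compactSpace_unitaryGroup {𝕜 : Type*} [RCLike 𝕜] : CompactSpace (unitaryGroup n 𝕜) := by
  refine isCompact_iff_compactSpace.mp (Metric.isCompact_of_isClosed_isBounded isClosed_unitary ?_)
  refine isBounded_iff_forall_norm_le.mpr ⟨√(Fintype.card n), fun U hU => Real.le_sqrt_of_sq_le ?_⟩
  have norm_sq_eq := trace_conjTranspose_mul_self_eq_norm_sq U
  rw [← star_eq_conjTranspose, star_mul_self_of_mem hU, trace_one] at norm_sq_eq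
  exact_mod_cast norm_sq_eq.ge

end UnitaryConjugation

section Integration

instance borelSpace_matrix {m n : Type*} [Countable m] [Countable n] :
    BorelSpace (Matrix m n ℂ) :=
  inferInstanceAs (BorelSpace (m → n → ℂ))

theorem integrable_of_continuous_of_compactSpace {X E : Type*} [TopologicalSpace X] [CompactSpace X]
    [MeasurableSpace X] [OpensMeasurableSpace X] [NormedAddCommGroup E]
    [SecondCountableTopologyEither X E]
    {μ : Measure X} [IsFiniteMeasure μ] {f : X → E} (hf : Continuous f) : Integrable f μ :=
  hf.integrable_of_hasCompactSupport (.of_compactSpace f)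

theorem integral_traceNorm_sq_le {X n : Type*} [TopologicalSpace X] [CompactSpace X]
    [MeasurableSpace X] [OpensMeasurableSpace X] [Fintype n] [DecidableEq n]
    {μ : Measure X} [IsFiniteMeasure μ] {f : X → Matrix n n ℂ} (hf : Continuous f) :
    ∫ x, traceNorm (f x) ^ 2 ∂μ ≤ Fintype.card n * ∫ x, ‖f x‖ ^ 2 ∂μ := by
  rw [← integral_const_mul]
  exact integral_mono_of_nonneg (.of_forall fun x => sq_nonneg _)
    (integrable_of_continuous_of_compactSpace (by fun_prop))
    (.of_forall fun x => traceNorm_sq_le_card_mul_norm_sq (f x))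

end Integration

theorem exists_eq_ite_add_of_perm_invariant {n R : Type*} [DecidableEq n]
    [AddCommGroup R] {f : n → n → R}
    (hf : ∀ (σ : Equiv.Perm n) i j, f (σ i) (σ j) = f i j) :
    ∃ α β : R, ∀ i j, f i j = (if i = j then α else 0) + β := by
  rcases subsingleton_or_nontrivial n with hn | ⟨i₀, j₀, h₀⟩
  · rcases isEmpty_or_nonempty n with _ | ⟨⟨i₀⟩⟩
    · exact ⟨0, 0, isEmptyElim⟩
    · refine ⟨f i₀ i₀, 0, fun i j => ?_⟩
      simp [Subsingleton.elim i i₀, Subsingleton.elim j i₀]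
  · refine ⟨f i₀ i₀ - f i₀ j₀, f i₀ j₀, fun i j => ?_⟩
    by_cases hij : i = j
    · subst hij
      rw [← hf (Equiv.swap i i₀) i i]
      simp
    · obtain ⟨σ, hσi, hσj⟩ := MulAction.is_two_pretransitive_iff.mp
        (Equiv.Perm.isMultiplyPretransitive n 2) hij h₀
      simp only [Equiv.Perm.smul_def] at hσi hσj
      simp [hij, ← hf σ i j, hσi, hσj]

section UnitaryCovariance

open Unitary

variable {n : Type*} [Fintype n] [DecidableEq n]

/-- A linear map on matrices is unitarily covariant if it commutes with conjugation by every
unitary matrix. -/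
def IsUnitaryCovariant (Φ : Matrix n n ℂ →ₗ[ℂ] Matrix n n ℂ) : Prop :=
  ∀ (V : unitaryGroup n ℂ) (Y : Matrix n n ℂ),
    Φ (conjStarAlgAut ℂ _ V Y) = conjStarAlgAut ℂ _ V (Φ Y)

theorem permMatrix_mem_unitaryGroup {R : Type*} [CommRing R] [StarRing R] (σ : Equiv.Perm n) :
    σ.permMatrix R ∈ unitaryGroup n R := by
  rw [mem_unitaryGroup_iff, star_eq_conjTranspose, conjTranspose_permMatrix,
    ← permMatrix_mul, inv_mul_cancel, permMatrix_one]

theorem permMatrix_mul_mul_star {R : Type*} [CommRing R] [StarRing R] (σ : Equiv.Perm n)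
    (Y : Matrix n n R) : σ.permMatrix R * Y * star (σ.permMatrix R) = Y.submatrix σ σ := by
  rw [star_eq_conjTranspose, conjTranspose_permMatrix]
  ext i j
  simp [PEquiv.toMatrix_toPEquiv_mul, PEquiv.mul_toMatrix_toPEquiv, Equiv.Perm.inv_def]

theorem diagonal_mem_unitaryGroup {R : Type*} [CommRing R] [StarRing R] {d : n → R}
    (hd : ∀ i, d i * star (d i) = 1) : diagonal d ∈ unitaryGroup n R := by
  simp [mem_unitaryGroup_iff, star_eq_conjTranspose, diagonal_conjTranspose, hd]

variable {Φ : Matrix n n ℂ →ₗ[ℂ] Matrix n n ℂ}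

namespace IsUnitaryCovariant

theorem apply_submatrix (hΦ : IsUnitaryCovariant Φ) (σ : Equiv.Perm n) (Y : Matrix n n ℂ) :
    Φ (Y.submatrix σ σ) = (Φ Y).submatrix σ σ := by
  simpa only [conjStarAlgAut_apply, permMatrix_mul_mul_star] using
    hΦ ⟨_, permMatrix_mem_unitaryGroup σ⟩ Y

theorem apply_diagonal_off_diag (hΦ : IsUnitaryCovariant Φ) (d : n → ℂ) {a b : n} (hab : a ≠ b) :
    Φ (diagonal d) a b = 0 := by
  let reflection : n → ℂ := Function.update 1 a (-1)
  have reflection_mem : diagonal reflection ∈ unitaryGroup n ℂ := by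
    refine diagonal_mem_unitaryGroup fun i => ?_
    by_cases hi : i = a <;> simp [reflection, hi]
  have reflection_fixes :
      conjStarAlgAut ℂ _ ⟨_, reflection_mem⟩ (diagonal d) = diagonal d := by
    have diagonals_commute := commute_diagonal reflection d
    rw [conjStarAlgAut_apply, diagonals_commute.eq, mul_assoc, mul_star_self_of_mem reflection_mem,
      mul_one]
  have sign_flip : Φ (diagonal d) a b = -Φ (diagonal d) a b := by
    simpa [reflection_fixes, conjStarAlgAut_apply, star_eq_conjTranspose, diagonal_conjTranspose,
      reflection, hab.symm] using congrFun₂ (hΦ ⟨_, reflection_mem⟩ (diagonal d)) a b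
  exact self_eq_neg.mp sign_flip

theorem exists_apply_diagonal (hΦ : IsUnitaryCovariant Φ) :
    ∃ α β : ℂ, ∀ d, Φ (diagonal d) = α • diagonal d + (β * (diagonal d).trace) • 1 := by
  have perm_invariant (σ : Equiv.Perm n) (i j : n) :
      Φ (single (σ i) (σ i) 1) (σ j) (σ j) = Φ (single i i 1) j j := by
    have h := congrFun₂ (hΦ.apply_submatrix σ (single (σ i) (σ i) 1)) j j
    simpa using h.symm
  obtain ⟨α, β, hαβ⟩ := exists_eq_ite_add_of_perm_invariant
    (f := fun i j => Φ (single i i 1) j j) perm_invariant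
  have diagonal_entry (d : n → ℂ) (j : n) :
      Φ (diagonal d) j j = ∑ i, d i * Φ (single i i 1) j j := by
    simp only [← sum_single_eq_diagonal, map_sum, Matrix.sum_apply]
    refine Finset.sum_congr rfl fun i _ => ?_
    rw [← smul_eq_mul, ← Matrix.smul_apply, ← map_smul, smul_single, smul_eq_mul, mul_one]
  refine ⟨α, β, fun d => ?_⟩
  ext a b
  by_cases hab : a = b
  · subst hab
    simp [diagonal_entry, hαβ, mul_add, Finset.sum_add_distrib, Finset.mul_sum, mul_comm]
  · simp [hΦ.apply_diagonal_off_diag d hab, hab]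

theorem exists_eq_smul_add_trace_smul_one (hΦ : IsUnitaryCovariant Φ) :
    ∃ α β : ℂ, ∀ Y, Φ Y = α • Y + (β * Y.trace) • 1 := by
  obtain ⟨α, β, hdiag⟩ := hΦ.exists_apply_diagonal
  have apply_hermitian (H : Matrix n n ℂ) (hH : H.IsHermitian) :
      Φ H = α • H + (β * H.trace) • 1 := by
    rw [hH.spectral_theorem, hΦ, hdiag, map_add, map_smul, map_smul, map_one,
      trace_conjStarAlgAut]
  refine ⟨α, β, fun Y => ?_⟩
  rw [← realPart_add_I_smul_imaginaryPart Y, map_add, map_smul,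
    apply_hermitian _ (realPart Y).2, apply_hermitian _ (imaginaryPart Y).2, trace_add,
    trace_smul]
  module

end IsUnitaryCovariant

end UnitaryCovariance

section SecondMoment

open Unitary

theorem linearMap_trace_eq_sum_apply_single {m n R : Type*} [Fintype m] [DecidableEq m] [Fintype n]
    [DecidableEq n] [CommRing R] (L : Matrix m n R →ₗ[R] Matrix m n R) :
    LinearMap.trace R _ L = ∑ i, ∑ j, L (single i j 1) i j := by
  rw [LinearMap.trace_eq_matrix_trace R (stdBasis R m n), Matrix.trace, Fintype.sum_prod_type]
  simp only [diag, LinearMap.toMatrix_apply, stdBasis_eq_single]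
  rfl

variable {n : Type*} [Fintype n] [DecidableEq n]

/-- The second moment of the random matrix `U * X * star U`, where `U` has distribution `μ`. It is
encoded as the linear map `Y ↦ 𝔼 ⟪U * X * star U, Y⟫ • (U * X * star U)`, for the Hilbert-Schmidt
inner product `⟪A, B⟫ = (Aᴴ * B).trace`. -/
noncomputable def conjSecondMoment (μ : Measure (unitaryGroup n ℂ)) [IsFiniteMeasure μ]
    (X : Matrix n n ℂ) : Matrix n n ℂ →ₗ[ℂ] Matrix n n ℂ where
  toFun Y := ∫ U, ((conjStarAlgAut ℂ _ U X)ᴴ * Y).trace • conjStarAlgAut ℂ _ U X ∂μ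
  map_add' Y Z := by
    simp only [Matrix.mul_add, trace_add, add_smul]
    exact integral_add (integrable_of_continuous_of_compactSpace (by fun_prop))
      (integrable_of_continuous_of_compactSpace (by fun_prop))
  map_smul' c Y := by
    simp only [Matrix.mul_smul, trace_smul, smul_assoc, RingHom.id_apply, integral_smul]

variable (μ : Measure (unitaryGroup n ℂ)) [IsFiniteMeasure μ]

theorem apply_conjSecondMoment (X Y : Matrix n n ℂ)
    (ℓ : Matrix n n ℂ →ₗ[ℂ] ℂ) :
    ℓ (conjSecondMoment μ X Y) =
      ∫ U, ((conjStarAlgAut ℂ _ U X)ᴴ * Y).trace * ℓ (conjStarAlgAut ℂ _ U X) ∂μ := by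
  refine (ℓ.toContinuousLinearMap.integral_comp_comm
    (integrable_of_continuous_of_compactSpace (by fun_prop))).symm.trans ?_
  exact integral_congr_ae (.of_forall fun U => map_smul ℓ _ _)

theorem isUnitaryCovariant_conjSecondMoment [μ.IsMulLeftInvariant]
    (X : Matrix n n ℂ) : IsUnitaryCovariant (conjSecondMoment μ X) := by
  intro V Y
  ext i j
  calc conjSecondMoment μ X (conjStarAlgAut ℂ _ V Y) i j
      = ∫ U, ((conjStarAlgAut ℂ _ U X)ᴴ * conjStarAlgAut ℂ _ V Y).trace *
          conjStarAlgAut ℂ _ U X i j ∂μ :=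
        apply_conjSecondMoment μ X _ (entryLinearMap ℂ ℂ i j)
    _ = ∫ U, ((conjStarAlgAut ℂ _ (V * U) X)ᴴ * conjStarAlgAut ℂ _ V Y).trace *
          conjStarAlgAut ℂ _ (V * U) X i j ∂μ :=
        (integral_mul_left_eq_self (fun U => ((conjStarAlgAut ℂ _ U X)ᴴ *
          conjStarAlgAut ℂ _ V Y).trace * conjStarAlgAut ℂ _ U X i j) V).symm
    _ = ∫ U, ((conjStarAlgAut ℂ _ U X)ᴴ * Y).trace *
          conjStarAlgAut ℂ _ V (conjStarAlgAut ℂ _ U X) i j ∂μ := by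
        simp only [map_mul (conjStarAlgAut ℂ (Matrix n n ℂ)), StarAlgEquiv.mul_apply,
          conjStarAlgAut_conjTranspose_mul, trace_conjStarAlgAut]
    _ = conjStarAlgAut ℂ _ V (conjSecondMoment μ X Y) i j :=
        (apply_conjSecondMoment μ X Y (entryLinearMap ℂ ℂ i j ∘ₗ
          (conjStarAlgAut ℂ _ V).toAlgEquiv.toLinearMap)).symm

theorem trace_comp_conjSecondMoment (X : Matrix n n ℂ)
    (L : Matrix n n ℂ →ₗ[ℂ] Matrix n n ℂ) :
    LinearMap.trace ℂ _ (L ∘ₗ conjSecondMoment μ X) =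
      ∫ U, ((conjStarAlgAut ℂ _ U X)ᴴ * L (conjStarAlgAut ℂ _ U X)).trace ∂μ := by
  have L_continuous : Continuous L := L.continuous_of_finiteDimensional
  have entry_eq_integral (i j : n) : L (conjSecondMoment μ X (single i j 1)) i j =
      ∫ U, star (conjStarAlgAut ℂ _ U X i j) * L (conjStarAlgAut ℂ _ U X) i j ∂μ := by
    refine (apply_conjSecondMoment μ X _ (entryLinearMap ℂ ℂ i j ∘ₗ L)).trans ?_
    simp [trace_mul_single, -conjStarAlgAut_apply]
  simp only [linearMap_trace_eq_sum_apply_single, LinearMap.comp_apply, entry_eq_integral,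
    Matrix.trace, diag, mul_apply, conjTranspose_apply]
  have entry_integrable (i j : n) : Integrable (fun U => star (conjStarAlgAut ℂ _ U X i j) *
      L (conjStarAlgAut ℂ _ U X) i j) μ :=
    integrable_of_continuous_of_compactSpace (by fun_prop)
  rw [Finset.sum_comm, integral_finsetSum _ fun j _ => integrable_finsetSum _ fun i _ =>
    entry_integrable i j]
  exact Finset.sum_congr rfl fun j _ => (integral_finsetSum _ fun i _ => entry_integrable i j).symm

theorem exists_integral_trace_conjStarAlgAut_eq [μ.IsMulLeftInvariant] (X : Matrix n n ℂ) :
    ∃ α β : ℂ, ∀ L : Matrix n n ℂ →ₗ[ℂ] Matrix n n ℂ,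
      ∫ U, ((conjStarAlgAut ℂ _ U X)ᴴ * L (conjStarAlgAut ℂ _ U X)).trace ∂μ =
        α * LinearMap.trace ℂ _ L + β * (L 1).trace := by
  obtain ⟨α, β, hαβ⟩ :=
    (isUnitaryCovariant_conjSecondMoment μ X).exists_eq_smul_add_trace_smul_one
  refine ⟨α, β, fun L => ?_⟩
  have comp_eq :
      L ∘ₗ conjSecondMoment μ X = α • L + β • (traceLinearMap n ℂ ℂ).smulRight (L 1) := by
    ext1 Y
    simp [hαβ, smul_smul]
  rw [← trace_comp_conjSecondMoment, comp_eq]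
  simp

end SecondMoment

section PartialTrace

theorem sum_norm_submatrix_sq {k l m n α : Type*} [Fintype k] [Fintype l] [Fintype m] [Fintype n]
    [SeminormedAddCommGroup α] (M : Matrix (k × l) (m × n) α) :
    ∑ r, ∑ s, ‖M.submatrix (·, r) (·, s)‖ ^ 2 = ‖M‖ ^ 2 := by
  simp only [frobenius_norm_sq, submatrix_apply, Fintype.sum_prod_type_right]
  exact Finset.sum_congr rfl fun r _ => Finset.sum_comm

theorem ptrSnd_eq_sum_submatrix {m n : Type*} [Fintype n] (M : Matrix (m × n) (m × n) ℂ) :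
    ptrSnd M = ∑ b, M.submatrix (·, b) (·, b) := by
  ext i j
  simp [ptrSnd, Matrix.sum_apply]

theorem posSemidef_ptrSnd {m n : Type*} [Fintype n] {M : Matrix (m × n) (m × n) ℂ}
    (hM : M.PosSemidef) : (ptrSnd M).PosSemidef := by
  rw [ptrSnd_eq_sum_submatrix]
  exact posSemidef_sum _ fun b _ => hM.submatrix _

variable {m n : Type*} [Fintype m]

theorem ptrFst_eq_sum_submatrix (M : Matrix (m × n) (m × n) ℂ) :
    ptrFst M = ∑ a, M.submatrix (a, ·) (a, ·) := by
  ext i j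
  simp [ptrFst, Matrix.sum_apply]

theorem posSemidef_ptrFst {M : Matrix (m × n) (m × n) ℂ} (hM : M.PosSemidef) :
    (ptrFst M).PosSemidef := by
  rw [ptrFst_eq_sum_submatrix]
  exact posSemidef_sum _ fun a _ => hM.submatrix _

theorem trace_submatrix_eq_ptrFst_apply (M : Matrix (m × n) (m × n) ℂ) (r s : n) :
    (M.submatrix (·, r) (·, s)).trace = ptrFst M r s := rfl

theorem trace_ptrFst [Fintype n] (M : Matrix (m × n) (m × n) ℂ) : (ptrFst M).trace = M.trace := by
  simp only [trace, ptrFst, diag, of_apply, Fintype.sum_prod_type_right]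

theorem trace_ptrSnd [Fintype n] (M : Matrix (m × n) (m × n) ℂ) :
    (ptrSnd M).trace = M.trace := by
  simp only [trace, ptrSnd, diag, of_apply, Fintype.sum_prod_type]

theorem ptrFst_kronecker (A : Matrix m m ℂ) (B : Matrix n n ℂ) :
    ptrFst (A ⊗ₖ B) = A.trace • B := by
  ext i j
  simp [ptrFst, trace, Finset.sum_mul]

theorem continuous_ptrFst :
    Continuous (ptrFst : Matrix (m × n) (m × n) ℂ → Matrix n n ℂ) := by
  unfold ptrFst
  fun_prop

variable (m n) in
/-- The partial trace over the first tensor factor, bundled as a linear map. -/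
noncomputable def ptrFstLinearMap : Matrix (m × n) (m × n) ℂ →ₗ[ℂ] Matrix n n ℂ where
  toFun := ptrFst
  map_add' M N := by
    ext i j
    simp [ptrFst, Finset.sum_add_distrib]
  map_smul' c M := by
    ext i j
    simp [ptrFst, Finset.mul_sum]

@[simp]
theorem ptrFstLinearMap_apply (M : Matrix (m × n) (m × n) ℂ) :
    ptrFstLinearMap m n M = ptrFst M := rfl

theorem ptrFst_sub_kronecker_eq_zero [Fintype n] {M : Matrix (m × n) (m × n) ℂ}
    (hM : M.trace = 1) : ptrFst (M - ptrSnd M ⊗ₖ ptrFst M) = 0 := by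
  rw [← ptrFstLinearMap_apply, map_sub, ptrFstLinearMap_apply, ptrFstLinearMap_apply,
    ptrFst_kronecker, trace_ptrSnd, hM, one_smul, sub_self]

theorem norm_sub_kronecker_sq_le [Fintype n] {ψ : Matrix (m × n) (m × n) ℂ}
    (hψ : ψ.PosSemidef) :
    ‖ψ - ptrSnd ψ ⊗ₖ ptrFst ψ‖ ^ 2 ≤ (ψ * ψ).trace.re +
      (ptrSnd ψ * ptrSnd ψ).trace.re * (ptrFst ψ * ptrFst ψ).trace.re := by
  classical
  have hA := posSemidef_ptrSnd hψ
  have hR := posSemidef_ptrFst hψ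
  rw [← trace_kronecker_mul_self_re hA.1]
  exact norm_sub_sq_le_of_posSemidef hψ (hA.kronecker hR)

theorem trace_conjTranspose_mul_one_kronecker [DecidableEq m] [Fintype n]
    (M : Matrix (m × n) (m × n) ℂ) (N : Matrix n n ℂ) :
    (Mᴴ * ((1 : Matrix m m ℂ) ⊗ₖ N)).trace = ((ptrFst M)ᴴ * N).trace := by
  simp only [trace, diag, mul_apply, conjTranspose_apply, kroneckerMap_apply, one_apply, ptrFst,
    of_apply, star_sum, Finset.sum_mul, Fintype.sum_prod_type, ite_mul, one_mul, zero_mul,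
    mul_ite, mul_zero, Finset.sum_ite_irrel, Finset.sum_const_zero, Finset.sum_ite_eq',
    Finset.mem_univ, if_true]
  rw [Finset.sum_comm]
  exact Finset.sum_congr rfl fun j _ => Finset.sum_comm

variable (m n) in
/-- The partial trace over the first tensor factor followed by its adjoint `N ↦ 1 ⊗ₖ N` for the
Hilbert-Schmidt inner product, so that `(Mᴴ * ptrFstGram m n M).trace = ‖ptrFst M‖ ^ 2`. -/
noncomputable def ptrFstGram [DecidableEq m] :
    Matrix (m × n) (m × n) ℂ →ₗ[ℂ] Matrix (m × n) (m × n) ℂ :=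
  kroneckerBilinear (R := ℂ) (1 : Matrix m m ℂ) ∘ₗ ptrFstLinearMap m n

variable [DecidableEq m] [Fintype n]

theorem trace_conjTranspose_mul_ptrFstGram (M : Matrix (m × n) (m × n) ℂ) :
    (Mᴴ * ptrFstGram m n M).trace = (‖ptrFst M‖ : ℂ) ^ 2 :=
  (trace_conjTranspose_mul_one_kronecker M _).trans (trace_conjTranspose_mul_self_eq_norm_sq _)

theorem trace_ptrFstGram_apply (M : Matrix (m × n) (m × n) ℂ) :
    (ptrFstGram m n M).trace = Fintype.card m * M.trace := by
  refine (trace_kronecker _ _).trans ?_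
  rw [trace_one, ptrFstLinearMap_apply, trace_ptrFst]

variable (m n) in
theorem trace_ptrFstGram :
    LinearMap.trace ℂ _ (ptrFstGram m n) = Fintype.card m * (Fintype.card n : ℂ) ^ 2 := by
  classical
  have diagonal_entry (i j : m × n) :
      ptrFstGram m n (single i j 1) i j = if i.1 = j.1 then 1 else 0 := by
    simp [ptrFstGram, kroneckerBilinear, ptrFst, one_apply, single_apply, ite_and, Prod.ext_iff,
      eq_comm (a := j.1) (b := i.1)]
  have row_sum (i : m × n) :
      ∑ j : m × n, (if i.1 = j.1 then 1 else 0 : ℂ) = Fintype.card n := by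
    rw [Fintype.sum_prod_type_right]
    simp
  simp [linearMap_trace_eq_sum_apply_single, diagonal_entry, row_sum, sq, mul_assoc,
    -Finset.sum_boole]

end PartialTrace

section AveragedPartialTrace

open Unitary

variable {m n : Type*} [Fintype m] [DecidableEq m] [Fintype n] [DecidableEq n]
  (μ : Measure (unitaryGroup (m × n) ℂ)) [IsProbabilityMeasure μ] [μ.IsMulLeftInvariant]
  {X : Matrix (m × n) (m × n) ℂ}

theorem card_sq_sub_one_mul_integral_norm_ptrFst_sq (hX : X.trace = 0) :
    (Fintype.card (m × n) ^ 2 - 1) *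
      (Fintype.card m * ∫ U, ‖ptrFst (conjStarAlgAut ℂ _ U X)‖ ^ 2 ∂μ) =
      (Fintype.card (m × n) ^ 2 - Fintype.card m ^ 2) * ‖X‖ ^ 2 := by
  obtain ⟨α, β, moment⟩ := exists_integral_trace_conjStarAlgAut_eq μ X
  have norm_moment := moment LinearMap.id
  have trace_moment := moment ((traceLinearMap _ ℂ ℂ).smulRight 1)
  have ptrFst_moment := moment (ptrFstGram m n)
  simp only [LinearMap.id_apply, trace_conjTranspose_mul_self_eq_norm_sq,
    frobenius_norm_conjStarAlgAut, integral_const, probReal_univ, one_smul, LinearMap.trace_id,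
    Module.finrank_matrix, Module.finrank_self, mul_one, Nat.cast_mul, trace_one] at norm_moment
  simp only [LinearMap.smulRight_apply, traceLinearMap_apply, trace_conjStarAlgAut, hX, zero_smul,
    mul_zero, trace_zero, integral_zero, LinearMap.trace_smulRight, trace_one, trace_smul,
    smul_eq_mul] at trace_moment
  simp only [trace_conjTranspose_mul_ptrFstGram, trace_ptrFstGram, trace_ptrFstGram_apply,
    trace_one]
    at ptrFst_moment
  rw [Fintype.card_prod, Nat.cast_mul] at *
  apply Complex.ofReal_injective
  push_cast [← integral_complex_ofReal, ptrFst_moment]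
  linear_combination
    (Fintype.card m ^ 2 - (Fintype.card m * Fintype.card n) ^ 2 : ℂ) * norm_moment -
      (Fintype.card m ^ 2 - 1) * (Fintype.card m * Fintype.card n) * trace_moment

theorem card_mul_integral_norm_ptrFst_sq_le (hX : X.trace = 0) :
    Fintype.card m * ∫ U, ‖ptrFst (conjStarAlgAut ℂ _ U X)‖ ^ 2 ∂μ ≤ ‖X‖ ^ 2 := by
  rcases subsingleton_or_nontrivial (m × n) with hmn | hmn
  · have X_eq_zero : X = 0 := by
      ext i j
      rw [Subsingleton.elim j i, Matrix.zero_apply, ← hX, trace, Fintype.sum_subsingleton _ i,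
        diag_apply]
    have ptrFst_zero : ptrFst (0 : Matrix (m × n) (m × n) ℂ) = 0 := map_zero (ptrFstLinearMap m n)
    simp [X_eq_zero, ptrFst_zero, -conjStarAlgAut_apply]
  · obtain ⟨⟨a, -⟩⟩ := hmn.to_nonempty
    have one_le_card : (1 : ℝ) ≤ Fintype.card m := by
      exact_mod_cast Fintype.card_pos_iff.mpr ⟨a⟩
    have one_lt_card : (1 : ℝ) < Fintype.card (m × n) := by exact_mod_cast Fintype.one_lt_card
    refine le_of_mul_le_mul_left ?_ (a := (Fintype.card (m × n) : ℝ) ^ 2 - 1) (by nlinarith)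
    rw [card_sq_sub_one_mul_integral_norm_ptrFst_sq μ hX]
    gcongr
    nlinarith

end AveragedPartialTrace

section ReducedState

open Unitary

variable {ιA₁ ιA₂ ιR : Type} [Fintype ιA₁] [Fintype ιA₂] [Fintype ιR] [DecidableEq ιR]

theorem sigmaA2R_sub (ψ φ : Matrix ((ιA₁ × ιA₂) × ιR) ((ιA₁ × ιA₂) × ιR) ℂ)
    (U : Matrix (ιA₁ × ιA₂) (ιA₁ × ιA₂) ℂ) :
    sigmaA2R (ψ - φ) U = sigmaA2R ψ U - sigmaA2R φ U := by
  ext i j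
  simp [sigmaA2R, Matrix.mul_sub, Matrix.sub_mul]

theorem sigmaA2R_kronecker (X : Matrix (ιA₁ × ιA₂) (ιA₁ × ιA₂) ℂ) (Y : Matrix ιR ιR ℂ)
    (U : Matrix (ιA₁ × ιA₂) (ιA₁ × ιA₂) ℂ) :
    sigmaA2R (X ⊗ₖ Y) U = ptrFst (U * X * Uᴴ) ⊗ₖ Y := by
  ext i j
  simp [sigmaA2R, ptrFst, conjTranspose_kronecker, ← mul_kronecker_mul, Finset.sum_mul]

variable [DecidableEq ιA₁] [DecidableEq ιA₂]
  (ψ : Matrix ((ιA₁ × ιA₂) × ιR) ((ιA₁ × ιA₂) × ιR) ℂ) (U : unitaryGroup (ιA₁ × ιA₂) ℂ)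

theorem sigmaA2R_submatrix (r s : ιR) :
    (sigmaA2R ψ U).submatrix (·, r) (·, s) =
      ptrFst (conjStarAlgAut ℂ _ U (ψ.submatrix (·, r) (·, s))) := by
  ext i j
  simp only [sigmaA2R, ptrFst, submatrix_apply, of_apply, conjStarAlgAut_apply]
  refine Finset.sum_congr rfl fun a _ => ?_
  simp [mul_apply, conjTranspose_kronecker, star_eq_conjTranspose, one_apply,
    Fintype.sum_prod_type_right]

theorem ptrFst_sigmaA2R : ptrFst (sigmaA2R ψ U) = ptrFst ψ := by
  ext r s
  rw [← trace_submatrix_eq_ptrFst_apply, sigmaA2R_submatrix, trace_ptrFst, trace_conjStarAlgAut,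
    trace_submatrix_eq_ptrFst_apply]

theorem ptrSnd_sigmaA2R : ptrSnd (sigmaA2R ψ U) = ptrFst (conjStarAlgAut ℂ _ U (ptrSnd ψ)) := by
  simp only [ptrSnd_eq_sum_submatrix, sigmaA2R_submatrix, ← ptrFstLinearMap_apply,
    map_sum]

theorem sigmaA2R_sub_kronecker :
    sigmaA2R ψ U - ptrSnd (sigmaA2R ψ U) ⊗ₖ ptrFst (sigmaA2R ψ U) =
      sigmaA2R (ψ - ptrSnd ψ ⊗ₖ ptrFst ψ) U := by
  rw [sigmaA2R_sub, sigmaA2R_kronecker, ptrSnd_sigmaA2R, ptrFst_sigmaA2R, conjStarAlgAut_apply,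
    star_eq_conjTranspose]

@[fun_prop]
theorem continuous_sigmaA2R :
    Continuous fun U : unitaryGroup (ιA₁ × ιA₂) ℂ => sigmaA2R ψ U := by
  refine continuous_matrix fun i j => ?_
  have block_continuous := (continuous_ptrFst.comp
    (continuous_conjStarAlgAut (ψ.submatrix (·, i.2) (·, j.2)))).matrix_elem i.1 j.1
  exact block_continuous.congr fun U =>
    (congrFun₂ (sigmaA2R_submatrix ψ U i.2 j.2) i.1 j.1).symm

theorem card_mul_integral_norm_sigmaA2R_sq_le (μ : Measure (unitaryGroup (ιA₁ × ιA₂) ℂ))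
    [IsProbabilityMeasure μ] [μ.IsMulLeftInvariant]
    {ψ : Matrix ((ιA₁ × ιA₂) × ιR) ((ιA₁ × ιA₂) × ιR) ℂ} (hψ : ptrFst ψ = 0) :
    Fintype.card ιA₁ * ∫ U, ‖sigmaA2R ψ U.1‖ ^ 2 ∂μ ≤ ‖ψ‖ ^ 2 := by
  have block_integrable (r s : ιR) :
      Integrable (fun U => ‖(sigmaA2R ψ U.1).submatrix (·, r) (·, s)‖ ^ 2) μ :=
    integrable_of_continuous_of_compactSpace (by fun_prop)
  have block_bound (r s : ιR) :
      Fintype.card ιA₁ * ∫ U, ‖(sigmaA2R ψ U.1).submatrix (·, r) (·, s)‖ ^ 2 ∂μ ≤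
        ‖ψ.submatrix (·, r) (·, s)‖ ^ 2 := by
    have block_traceless : (ψ.submatrix (·, r) (·, s)).trace = 0 := by
      rw [trace_submatrix_eq_ptrFst_apply, hψ, Matrix.zero_apply]
    simpa only [sigmaA2R_submatrix] using
      card_mul_integral_norm_ptrFst_sq_le μ block_traceless
  rw [← sum_norm_submatrix_sq ψ]
  simp only [← sum_norm_submatrix_sq (sigmaA2R _ _)]
  rw [integral_finsetSum _ fun r _ => integrable_finsetSum _ fun s _ => block_integrable r s,
    Finset.mul_sum]
  refine Finset.sum_le_sum fun r _ => ?_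
  rw [integral_finsetSum _ fun s _ => block_integrable r s, Finset.mul_sum]
  exact Finset.sum_le_sum fun s _ => block_bound r s

end ReducedState

/-- **Decoupling theorem (Theorem 2), one-shot FQSW.**  For a density operator `ψ^{AR}` on
`A ⊗ R` with `A = A₁ ⊗ A₂`, the Haar average of the squared trace distance between
`σ^{A₂R}(U)` and `σ^{A₂}(U) ⊗ σ^{R}(U)` is at most
`(d_A d_R / d_{A₁}²)(Tr[(ψ^{AR})²] + Tr[(ψ^A)²]Tr[(ψ^R)²])`. -/
theorem decoupling
    {ιA₁ ιA₂ ιR : Type} [Fintype ιA₁] [DecidableEq ιA₁] [Fintype ιA₂] [DecidableEq ιA₂]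
    [Fintype ιR] [DecidableEq ιR]
    (ψ : Matrix ((ιA₁ × ιA₂) × ιR) ((ιA₁ × ιA₂) × ιR) ℂ)
    (hψ : ψ.PosSemidef) (hψtr : ψ.trace = 1)
    (μ : Measure (Matrix.unitaryGroup (ιA₁ × ιA₂) ℂ)) [IsProbabilityMeasure μ]
    (hμ : ∀ V : Matrix.unitaryGroup (ιA₁ × ιA₂) ℂ,
      μ.map (fun U : Matrix.unitaryGroup (ιA₁ × ιA₂) ℂ => V * U) = μ) :
    (∫ U : Matrix.unitaryGroup (ιA₁ × ιA₂) ℂ,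
        (traceNorm (sigmaA2R ψ (U : Matrix (ιA₁ × ιA₂) (ιA₁ × ιA₂) ℂ)
            - ptrSnd (sigmaA2R ψ U) ⊗ₖ ptrFst (sigmaA2R ψ U))) ^ 2 ∂μ)
      ≤ ((Fintype.card ιA₁ * Fintype.card ιA₂ * Fintype.card ιR : ℝ) / (Fintype.card ιA₁ : ℝ) ^ 2)
        * ((ψ * ψ).trace.re
            + ((ptrSnd ψ * ptrSnd ψ).trace.re) * ((ptrFst ψ * ptrFst ψ).trace.re)) := by
  have : μ.IsMulLeftInvariant := ⟨hμ⟩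
  have : Nonempty ιA₁ := by
    by_contra h
    simp [trace, not_nonempty_iff.mp h] at hψtr
  let Z := ψ - ptrSnd ψ ⊗ₖ ptrFst ψ
  have average_bound : Fintype.card ιA₁ * ∫ U, ‖sigmaA2R Z U.1‖ ^ 2 ∂μ ≤ ‖Z‖ ^ 2 :=
    card_mul_integral_norm_sigmaA2R_sq_le μ (ptrFst_sub_kronecker_eq_zero hψtr)
  simp only [sigmaA2R_sub_kronecker]
  calc ∫ U, traceNorm (sigmaA2R Z U.1) ^ 2 ∂μ
      ≤ Fintype.card (ιA₂ × ιR) * ∫ U, ‖sigmaA2R Z U.1‖ ^ 2 ∂μ :=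
        integral_traceNorm_sq_le (continuous_sigmaA2R Z)
    _ = Fintype.card ιA₁ * Fintype.card ιA₂ * Fintype.card ιR / Fintype.card ιA₁ ^ 2 *
          (Fintype.card ιA₁ * ∫ U, ‖sigmaA2R Z U.1‖ ^ 2 ∂μ) := by
        rw [Fintype.card_prod, Nat.cast_mul]
        field_simp
    _ ≤ _ := by
        gcongr
        exact average_bound.trans (norm_sub_kronecker_sq_le hψ)
end

section
/- Finite-blocklength converse for distributed compression (individual rate): let φ^{ABR} be a pure state on A⊗B⊗R with d_R ≤ d_A d_B, let n ≥ 1, and consider a distributed compression code for n copies of φ with isometric encoders E_A : A^{⊗n} → C_A⊗W_A, E_B : B^{⊗n} → C_B⊗W_B (with d_{W_A} ≤ d_A^{2n}) and isometric decoder D : C_A⊗C_B → Â⊗B̂⊗W_C. If the code has fidelity F ≥ 1−ε for some 0 < ε ≤ 1/(12e²), then 2 log₂ d_{C_A} ≥ n I(A;R)_φ − 2√(3ε) · n · log₂(d_A³ d_B) − η(2√(3ε)), where η(x) = −x log₂ x. -/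
open Matrix
open scoped ComplexOrder

open Classical in
/-- Von Neumann entropy `H(M) = −Tr[M log₂ M]`, via eigenvalues (with `0 log 0 = 0`). -/
noncomputable def vnEntropy {n : Type*} [Fintype n] [DecidableEq n] (M : Matrix n n ℂ) : ℝ :=
  if h : M.IsHermitian then ∑ i, -(h.eigenvalues i * Real.logb 2 (h.eigenvalues i)) else 0

/-- Reduced state on `A` of a state vector on `A ⊗ (B × R)`. -/
noncomputable def redA {ιA ιB ιR : Type} [Fintype ιB] [Fintype ιR]
    (v : ιA × (ιB × ιR) → ℂ) : Matrix ιA ιA ℂ :=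
  Matrix.of fun a a' => ∑ q : ιB × ιR, v (a, q) * star (v (a', q))

/-- Reduced state on `R` of a state vector on `A ⊗ (B × R)`. -/
noncomputable def redR {ιA ιB ιR : Type} [Fintype ιA] [Fintype ιB]
    (v : ιA × (ιB × ιR) → ℂ) : Matrix ιR ιR ℂ :=
  Matrix.of fun r r' => ∑ a : ιA, ∑ b : ιB, v (a, (b, r)) * star (v (a, (b, r')))

/-- Reduced state on `A ⊗ R` of a state vector on `A ⊗ (B × R)`. -/
noncomputable def redAR {ιA ιB ιR : Type} [Fintype ιB]
    (v : ιA × (ιB × ιR) → ℂ) : Matrix (ιA × ιR) (ιA × ιR) ℂ :=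
  Matrix.of fun p q => ∑ b : ιB, v (p.1, (b, p.2)) * star (v (q.1, (b, q.2)))

/-- The `n`-copy state vector `|φ⟩^{⊗n}` of `φ` on `A ⊗ (B × R)`, written on
`R^{⊗n} ⊗ (A^{⊗n} ⊗ B^{⊗n})`. -/
noncomputable def iidVec {ιA ιB ιR : Type} (φ : ιA × (ιB × ιR) → ℂ) (n : ℕ) :
    (Fin n → ιR) × ((Fin n → ιA) × (Fin n → ιB)) → ℂ :=
  fun p => ∏ k : Fin n, φ (p.2.1 k, (p.2.2 k, p.1 k))

/-- The global isometry `I_{R^n} ⊗ (D ∘ (E_A ⊗ E_B))` of a distributed compression code,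
with the output ordered as `(R^n × (Â × B̂)) × ((W_A × W_B) × W_C)`. -/
noncomputable def codeMap {ιA ιB ιR : Type} {n : ℕ} {γA ωA γB ωB ωC : Type}
    [Fintype γA] [Fintype γB] [Fintype ιR] [DecidableEq ιR]
    (EA : Matrix (γA × ωA) (Fin n → ιA) ℂ)
    (EB : Matrix (γB × ωB) (Fin n → ιB) ℂ)
    (D : Matrix (((Fin n → ιA) × (Fin n → ιB)) × ωC) (γA × γB) ℂ) :
    Matrix (((Fin n → ιR) × ((Fin n → ιA) × (Fin n → ιB))) × ((ωA × ωB) × ωC))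
      ((Fin n → ιR) × ((Fin n → ιA) × (Fin n → ιB))) ℂ :=
  Matrix.of fun p q =>
    if p.1.1 = q.1 then
      ∑ cA : γA, ∑ cB : γB,
        D (p.1.2, p.2.2) (cA, cB) * EA (cA, p.2.1.1) q.2.1 * EB (cB, p.2.1.2) q.2.2
    else 0

/-- The fidelity `F = ⟨ψ'| Tr_{W_AW_BW_C}[(I ⊗ D∘(E_A⊗E_B)) ψ' (…)†] |ψ'⟩` of a
distributed compression code on `n` copies of `φ`, where `|ψ'⟩ = |φ⟩^{⊗n}`. -/
noncomputable def codeFidelity {ιA ιB ιR : Type} {n : ℕ} {γA ωA γB ωB ωC : Type}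
    [Fintype ιA] [Fintype ιB] [Fintype ιR] [DecidableEq ιR]
    [Fintype γA] [Fintype γB] [Fintype ωA] [Fintype ωB] [Fintype ωC]
    (φ : ιA × (ιB × ιR) → ℂ)
    (EA : Matrix (γA × ωA) (Fin n → ιA) ℂ)
    (EB : Matrix (γB × ωB) (Fin n → ιB) ℂ)
    (D : Matrix (((Fin n → ιA) × (Fin n → ιB)) × ωC) (γA × γB) ℂ) : ℝ :=
  (star (iidVec φ n) ⬝ᵥ
    (Matrix.of fun i j : (Fin n → ιR) × ((Fin n → ιA) × (Fin n → ιB)) =>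
        ∑ w : (ωA × ωB) × ωC,
          (codeMap (ιR := ιR) EA EB D *
              Matrix.vecMulVec (iidVec φ n) (star (iidVec φ n)) *
              (codeMap (ιR := ιR) EA EB D)ᴴ) (i, w) (j, w)).mulVec
      (iidVec φ n)).re

/-!
Follow the global pure state through Alice's isometric encoder `P → C ⊗ W`, where `P = A^{⊗n}` and
`Q = B^{⊗n}`, `T = R^{⊗n}`. Since the state on `WT` is complementary to the one on `CQ`,
subadditivity gives `H(P) ≤ H(C) + H(W)` and `H(WT) = H(CQ) ≤ H(C) + H(Q)`. A code of high fidelity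
leaves the discarded system almost decoupled from the reference: exchanging the recovered systems
with a fresh copy of the source turns the final pure state into one whose overlap with the original
is the fidelity and whose state on `WT` is a product, so continuity of the entropy gives
`H(W) + H(T) ≤ H(WT) + δ`. Adding the three inequalities,
`H(P) + H(T) - H(Q) ≤ 2 log d_C + δ`, and the left-hand side is `n I(A;R)` because `H(Q) = H(PT)`.

The continuity estimate is obtained without the trace distance. For unit vectors `u`, `v` and
`β² = 1 + α²`, the hyperbolic rotation of `(u, v)` gives an identity
`ρ_u + ρ_{αu - βv} = ρ_v + ρ_{βu - αv}` between reduced states. When `u` and `v` have large overlap,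
`α` and `β` can be chosen such that both correction terms have small trace.
-/

section RealEntropy

/-- The pointwise form of Gibbs' inequality: `log x ≤ x - 1` at `x = q / p`. -/
lemma negMulLog_le_neg_mul_log_add_sub {p q : ℝ} (hp : 0 ≤ p) (hq : 0 ≤ q) (hpq : q = 0 → p = 0) :
    Real.negMulLog p ≤ -(p * Real.log q) + (q - p) := by
  rcases hp.eq_or_lt with rfl | hp
  · simpa using hq
  have hq : 0 < q := hq.lt_of_ne' fun h => hp.ne' (hpq h)
  have hlog := mul_le_mul_of_nonneg_left
    (Real.log_le_sub_one_of_pos (x := q / p) (by positivity)) hp.le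
  rw [Real.log_div hq.ne' hp.ne', mul_sub, mul_sub, mul_div_cancel₀ q hp.ne'] at hlog
  rw [Real.negMulLog]
  linarith

lemma sum_negMulLog_le_crossEntropy {ι : Type*} [Fintype ι] {p q : ι → ℝ} (hp : ∀ i, 0 ≤ p i)
    (hq : ∀ i, 0 ≤ q i) (hpq : ∀ i, q i = 0 → p i = 0) (hsum : ∑ i, q i ≤ ∑ i, p i) :
    ∑ i, Real.negMulLog (p i) ≤ -∑ i, p i * Real.log (q i) := by
  have h := Finset.sum_le_sum fun i (_ : i ∈ Finset.univ) =>
    negMulLog_le_neg_mul_log_add_sub (hp i) (hq i) (hpq i)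
  rw [Finset.sum_add_distrib, Finset.sum_sub_distrib, Finset.sum_neg_distrib] at h
  linarith

lemma sum_negMulLog_prod_le {a b : Type*} [Fintype a] [Fintype b] {p : a × b → ℝ}
    (hp : ∀ x, 0 ≤ p x) (hsum : ∑ x, p x = 1) :
    ∑ x, Real.negMulLog (p x) ≤
      ∑ i, Real.negMulLog (∑ j, p (i, j)) + ∑ j, Real.negMulLog (∑ i, p (i, j)) := by
  set α : a → ℝ := fun i => ∑ j, p (i, j) with hα
  set β : b → ℝ := fun j => ∑ i, p (i, j) with hβ
  have hα0 (i : a) : 0 ≤ α i := Finset.sum_nonneg fun j _ => hp (i, j)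
  have hβ0 (j : b) : 0 ≤ β j := Finset.sum_nonneg fun i _ => hp (i, j)
  have hpα (x : a × b) : p x ≤ α x.1 :=
    Finset.single_le_sum (f := fun j => p (x.1, j)) (fun j _ => hp _) (Finset.mem_univ x.2)
  have hpβ (x : a × b) : p x ≤ β x.2 :=
    Finset.single_le_sum (f := fun i => p (i, x.2)) (fun i _ => hp _) (Finset.mem_univ x.1)
  have hzero (x : a × b) (h : α x.1 * β x.2 = 0) : p x = 0 := by
    rcases mul_eq_zero.mp h with h | h
    · exact le_antisymm (h ▸ hpα x) (hp x)
    · exact le_antisymm (h ▸ hpβ x) (hp x)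
  have hα1 : ∑ i, α i = 1 := by rw [← hsum, Fintype.sum_prod_type]
  have hβ1 : ∑ j, β j = 1 := by rw [← hsum, Fintype.sum_prod_type_right]
  have hproduct : ∑ x : a × b, α x.1 * β x.2 = 1 := by
    rw [Fintype.sum_prod_type, ← Finset.sum_mul_sum, hα1, hβ1, one_mul]
  have hlog (x : a × b) : p x * Real.log (α x.1 * β x.2) =
      p x * Real.log (α x.1) + p x * Real.log (β x.2) := by
    by_cases hx : p x = 0
    · simp [hx]
    have hpos : 0 < p x := (hp x).lt_of_ne' hx
    rw [Real.log_mul (hpos.trans_le (hpα x)).ne' (hpos.trans_le (hpβ x)).ne', mul_add]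
  have hα_sum : ∑ x : a × b, p x * Real.log (α x.1) = -∑ i, Real.negMulLog (α i) := by
    simp only [Fintype.sum_prod_type, ← Finset.sum_mul, Real.negMulLog, neg_mul,
      Finset.sum_neg_distrib, neg_neg, hα]
  have hβ_sum : ∑ x : a × b, p x * Real.log (β x.2) = -∑ j, Real.negMulLog (β j) := by
    simp only [Fintype.sum_prod_type_right, ← Finset.sum_mul, Real.negMulLog, neg_mul,
      Finset.sum_neg_distrib, neg_neg, hβ]
  refine (sum_negMulLog_le_crossEntropy hp (fun x => mul_nonneg (hα0 _) (hβ0 _)) hzero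
    (by rw [hproduct, hsum])).trans_eq ?_
  simp only [hlog, Finset.sum_add_distrib, hα_sum, hβ_sum]
  ring

lemma sum_negMulLog_le_mul_log_card {ι : Type*} [Fintype ι] {p : ι → ℝ} (hp : ∀ i, 0 ≤ p i) :
    ∑ i, Real.negMulLog (p i) ≤
      (∑ i, p i) * Real.log (Fintype.card ι) + Real.negMulLog (∑ i, p i) := by
  rcases isEmpty_or_nonempty ι with _ | _
  · simp
  have hcard : (0 : ℝ) < Fintype.card ι := by exact_mod_cast Fintype.card_pos
  have hjensen := Real.concaveOn_negMulLog.le_map_sum (t := Finset.univ)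
    (w := fun _ : ι => (Fintype.card ι : ℝ)⁻¹) (p := p)
    (fun _ _ => by positivity) (by simp) (fun i _ => hp i)
  simp only [smul_eq_mul, ← Finset.mul_sum] at hjensen
  rw [inv_mul_le_iff₀ hcard, Real.negMulLog_mul] at hjensen
  refine hjensen.trans_eq ?_
  rw [Real.negMulLog, Real.log_inv]
  field_simp

lemma negMulLog_le_negMulLog_add_add {p q t : ℝ} (hp : 0 ≤ p) (hq : 0 ≤ q) (hpq : p + q ≤ 1 + t) :
    Real.negMulLog p ≤ Real.negMulLog (p + q) + q * (1 + t) := by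
  have hgibbs := negMulLog_le_neg_mul_log_add_sub hp (add_nonneg hp hq) fun h => by linarith
  have hlog : q * Real.log (p + q) ≤ q * t := by
    rcases (add_nonneg hp hq).eq_or_lt with h | h
    · rw [show q = 0 by linarith, zero_mul, zero_mul]
    · exact mul_le_mul_of_nonneg_left (by linarith [Real.log_le_sub_one_of_pos h]) hq
  rw [Real.negMulLog] at hgibbs ⊢
  rw [Real.negMulLog]
  linarith

lemma negMulLog_le_negMulLog_of_le_exp_neg_one {s t : ℝ} (hs : 0 ≤ s) (hst : s ≤ t)
    (ht : t ≤ Real.exp (-1)) : Real.negMulLog s ≤ Real.negMulLog t := by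
  have h := Real.mul_log_strictAntiOn.antitoneOn ⟨hs, hst.trans ht⟩ ⟨hs.trans hst, ht⟩ hst
  simpa only [Real.negMulLog, neg_mul, neg_le_neg_iff] using h

-- With `c² = 2 / θ` this is the rapidity parametrisation `β = cosh (log c)`, `α = sinh (log c)`.
lemma exists_hyperbolic_coeffs {θ F : ℝ} (hθ0 : 0 < θ) (hθ1 : θ ≤ 1) (hF : 1 - θ ^ 2 / 3 ≤ F) :
    ∃ α β : ℝ, β ^ 2 = 1 + α ^ 2 ∧ α ^ 2 + β ^ 2 - 2 * (α * β) * F ≤ θ := by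
  set c := Real.sqrt (2 / θ)
  have hc : c ^ 2 = 2 / θ := Real.sq_sqrt (by positivity)
  have hc0 : c ≠ 0 := (Real.sqrt_pos.mpr (by positivity)).ne'
  have hcinv : c⁻¹ ^ 2 = θ / 2 := by rw [inv_pow, hc, inv_div]
  have hcc : c * c⁻¹ = 1 := mul_inv_cancel₀ hc0
  refine ⟨(c - c⁻¹) / 2, (c + c⁻¹) / 2, by linear_combination hcc, ?_⟩
  have hexpand : ((c - c⁻¹) / 2) ^ 2 + ((c + c⁻¹) / 2) ^ 2
      - 2 * ((c - c⁻¹) / 2 * ((c + c⁻¹) / 2)) * F =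
      (2 / θ + θ / 2) / 2 - (2 / θ - θ / 2) * F / 2 := by
    rw [← hc, ← hcinv]
    ring
  have hcoeff : 0 ≤ 2 / θ - θ / 2 := by
    rw [sub_nonneg, le_div_iff₀ hθ0]
    nlinarith
  have hbound := mul_le_mul_of_nonneg_left hF hcoeff
  have hcancel : 2 / θ * θ ^ 2 = 2 * θ := by field_simp
  rw [hexpand]
  nlinarith [pow_pos hθ0 3]

end RealEntropy

section SpectralEntropy

lemma re_diag_nonneg {n : Type*} {M : Matrix n n ℂ} (hM : M.PosSemidef) (j : n) :
    0 ≤ (M j j).re :=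
  (Complex.nonneg_iff.mp hM.diag_nonneg).1

variable {a b : Type*} [Fintype a]

lemma re_diag_le_re_trace {M : Matrix a a ℂ} (hM : M.PosSemidef) (j : a) :
    (M j j).re ≤ M.trace.re := by
  rw [Matrix.trace, Complex.re_sum]
  exact Finset.single_le_sum (f := fun i => (M i i).re) (fun i _ => re_diag_nonneg hM i)
    (Finset.mem_univ j)

variable [DecidableEq a] [Fintype b] [DecidableEq b]

/-- The von Neumann entropy in nats. It is read off the roots of the characteristic polynomial, so
that no proof of Hermiticity has to be carried along and it can be compared for `M * N` and
`N * M`. -/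
noncomputable def spectralEntropy (M : Matrix a a ℂ) : ℝ :=
  (M.charpoly.roots.map fun z => Real.negMulLog z.re).sum

lemma vnEntropy_eq_spectralEntropy_div {M : Matrix a a ℂ} (hM : M.IsHermitian) :
    vnEntropy M = spectralEntropy M / Real.log 2 := by
  rw [vnEntropy, dif_pos hM, spectralEntropy, hM.roots_charpoly_eq_eigenvalues, Multiset.map_map]
  change _ = (∑ i, Real.negMulLog (hM.eigenvalues i : ℂ).re) / Real.log 2
  simp only [Complex.ofReal_re, Real.negMulLog, Real.logb, Finset.sum_div, neg_mul, neg_div,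
    mul_div_assoc]

lemma spectralEntropy_diagonal (d : a → ℝ) :
    spectralEntropy (Matrix.diagonal fun i => (d i : ℂ)) = ∑ i, Real.negMulLog (d i) := by
  rw [spectralEntropy, Matrix.charpoly_diagonal,
    Polynomial.roots_prod _ _ (Finset.prod_ne_zero_iff.mpr fun i _ => Polynomial.X_sub_C_ne_zero _)]
  simp

lemma spectralEntropy_transpose (M : Matrix a a ℂ) : spectralEntropy Mᵀ = spectralEntropy M := by
  rw [spectralEntropy, Matrix.charpoly_transpose, spectralEntropy]

lemma spectralEntropy_submatrix_equiv (M : Matrix a a ℂ) (e : b ≃ a) :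
    spectralEntropy (M.submatrix e e) = spectralEntropy M :=
  congrArg (fun p => (p.roots.map fun z => Real.negMulLog z.re).sum)
    (Matrix.charpoly_reindex e.symm M)

open Polynomial in
lemma spectralEntropy_mul_comm (M : Matrix a b ℂ) (N : Matrix b a ℂ) :
    spectralEntropy (M * N) = spectralEntropy (N * M) := by
  have hne (k : ℕ) {p : ℂ[X]} (hp : p.Monic) : X ^ k * p ≠ 0 :=
    mul_ne_zero (pow_ne_zero k X_ne_zero) hp.ne_zero
  have h := congrArg (fun p : ℂ[X] => (p.roots.map fun z => Real.negMulLog z.re).sum)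
    (Matrix.charpoly_mul_comm' M N)
  rw [roots_mul (hne _ (Matrix.charpoly_monic _)),
    roots_mul (hne _ (Matrix.charpoly_monic _))] at h
  simpa [spectralEntropy, Multiset.map_nsmul, Multiset.sum_nsmul] using h

lemma spectralEntropy_isometry_conj {E : Matrix b a ℂ} (hE : Eᴴ * E = 1) (M : Matrix a a ℂ) :
    spectralEntropy (E * M * Eᴴ) = spectralEntropy M := by
  rw [spectralEntropy_mul_comm, ← Matrix.mul_assoc, hE, Matrix.one_mul]

lemma trace_unitary_conj {U : Matrix a a ℂ} (hU : U * Uᴴ = 1) (M : Matrix a a ℂ) :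
    (Uᴴ * M * U).trace = M.trace := by
  rw [Matrix.trace_mul_comm, ← Matrix.mul_assoc, hU, Matrix.one_mul]

lemma spectralEntropy_unitary_conj {U : Matrix a a ℂ} (hU : U * Uᴴ = 1) (M : Matrix a a ℂ) :
    spectralEntropy (Uᴴ * M * U) = spectralEntropy M := by
  rw [spectralEntropy_mul_comm, ← Matrix.mul_assoc, hU, Matrix.one_mul]

lemma spectralEntropy_eq_sum_of_conj_eq_diagonal {M U : Matrix a a ℂ} {d : a → ℝ}
    (hU : U * Uᴴ = 1) (hM : Uᴴ * M * U = Matrix.diagonal fun i => (d i : ℂ)) :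
    spectralEntropy M = ∑ i, Real.negMulLog (d i) := by
  rw [← spectralEntropy_diagonal, ← hM, spectralEntropy_unitary_conj hU]

lemma exists_unitary_conj_eq_diagonal {M : Matrix a a ℂ} (hM : M.PosSemidef) :
    ∃ (U : Matrix a a ℂ) (d : a → ℝ), U * Uᴴ = 1 ∧ (∀ i, 0 ≤ d i) ∧
      Uᴴ * M * U = Matrix.diagonal fun i => (d i : ℂ) := by
  refine ⟨hM.1.eigenvectorUnitary, hM.1.eigenvalues, Unitary.coe_mul_star_self _,
    hM.eigenvalues_nonneg, ?_⟩
  have h := hM.1.conjStarAlgAut_star_eigenvectorUnitary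
  rwa [Unitary.conjStarAlgAut_star_apply] at h

lemma spectralEntropy_le_sum_diag {M : Matrix a a ℂ} (hM : M.PosSemidef) :
    spectralEntropy M ≤ ∑ j, Real.negMulLog (M j j).re := by
  obtain ⟨U, d, hU, hd, hUM⟩ := exists_unitary_conj_eq_diagonal hM
  have hU' : Uᴴ * U = 1 := mul_eq_one_comm.mp hU
  have hM_eq : M = U * Matrix.diagonal (fun i => (d i : ℂ)) * Uᴴ := by
    rw [← hUM]
    simp only [← Matrix.mul_assoc, hU, Matrix.one_mul]
    rw [Matrix.mul_assoc, hU, Matrix.mul_one]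
  have hrow (j : a) : ∑ i, Complex.normSq (U j i) = 1 := by
    have h := congrFun₂ hU j j
    simp only [Matrix.mul_apply, Matrix.conjTranspose_apply, Complex.star_def, Complex.mul_conj,
      Matrix.one_apply_eq] at h
    exact_mod_cast h
  have hcol (i : a) : ∑ j, Complex.normSq (U j i) = 1 := by
    have h := congrFun₂ hU' i i
    simp only [Matrix.mul_apply, Matrix.conjTranspose_apply, Complex.star_def,
      ← Complex.normSq_eq_conj_mul_self, Matrix.one_apply_eq] at h
    exact_mod_cast h
  have hdiag (j : a) : (M j j).re = ∑ i, Complex.normSq (U j i) * d i := by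
    rw [hM_eq, Matrix.mul_apply, Complex.re_sum]
    refine Finset.sum_congr rfl fun i _ => ?_
    rw [Matrix.mul_diagonal, Matrix.conjTranspose_apply, Complex.star_def, mul_right_comm,
      Complex.mul_conj, ← Complex.ofReal_mul, Complex.ofReal_re]
  calc spectralEntropy M
      = ∑ i, Real.negMulLog (d i) := spectralEntropy_eq_sum_of_conj_eq_diagonal hU hUM
    _ = ∑ j, ∑ i, Complex.normSq (U j i) * Real.negMulLog (d i) := by
        rw [Finset.sum_comm]
        simp only [← Finset.sum_mul, hcol, one_mul]
    _ ≤ ∑ j, Real.negMulLog (M j j).re := Finset.sum_le_sum fun j _ => by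
        rw [hdiag]
        exact Real.concaveOn_negMulLog.le_map_sum (fun i _ => Complex.normSq_nonneg _) (hrow j)
          fun i _ => hd i

lemma spectralEntropy_le_trace_mul_log_card {M : Matrix a a ℂ} (hM : M.PosSemidef) :
    spectralEntropy M ≤
      M.trace.re * Real.log (Fintype.card a) + Real.negMulLog M.trace.re := by
  have h := sum_negMulLog_le_mul_log_card fun j => re_diag_nonneg hM j
  rw [← Complex.re_sum] at h
  exact (spectralEntropy_le_sum_diag hM).trans h

lemma spectralEntropy_fromBlocks_le {A : Matrix a a ℂ} {B : Matrix a b ℂ} {C : Matrix b a ℂ}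
    {D : Matrix b b ℂ} (hA : A.PosSemidef) (hD : D.PosSemidef)
    (h : (Matrix.fromBlocks A B C D).PosSemidef) :
    spectralEntropy (Matrix.fromBlocks A B C D) ≤ spectralEntropy A + spectralEntropy D := by
  obtain ⟨U, d, hU, -, hUA⟩ := exists_unitary_conj_eq_diagonal hA
  obtain ⟨V, e, hV, -, hVD⟩ := exists_unitary_conj_eq_diagonal hD
  set W := Matrix.fromBlocks U 0 0 V with hW_def
  have hW : W * Wᴴ = 1 := by
    simp [hW_def, Matrix.fromBlocks_conjTranspose, Matrix.fromBlocks_multiply, hU, hV]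
  rw [← spectralEntropy_unitary_conj hW]
  refine (spectralEntropy_le_sum_diag (h.conjTranspose_mul_mul_same W)).trans_eq ?_
  rw [spectralEntropy_eq_sum_of_conj_eq_diagonal hU hUA,
    spectralEntropy_eq_sum_of_conj_eq_diagonal hV hVD]
  simp [hW_def, Matrix.fromBlocks_conjTranspose, Matrix.fromBlocks_multiply, hUA, hVD]

open scoped MatrixOrder Matrix.Norms.L2Operator in
lemma spectralEntropy_add_le {M N : Matrix a a ℂ} (hM : M.PosSemidef) (hN : N.PosSemidef) :
    spectralEntropy (M + N) ≤ spectralEntropy M + spectralEntropy N := by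
  obtain ⟨X, rfl⟩ := CStarAlgebra.nonneg_iff_eq_star_mul_self.mp hM.nonneg
  obtain ⟨Y, rfl⟩ := CStarAlgebra.nonneg_iff_eq_star_mul_self.mp hN.nonneg
  simp only [Matrix.star_eq_conjTranspose]
  have hgram := Matrix.fromRows_mul_fromCols X Y Xᴴ Yᴴ
  have hpsd : (Matrix.fromBlocks (X * Xᴴ) (X * Yᴴ) (Y * Xᴴ) (Y * Yᴴ)).PosSemidef := by
    rw [← hgram, ← Matrix.conjTranspose_fromRows_eq_fromCols_conjTranspose]
    exact Matrix.posSemidef_self_mul_conjTranspose _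
  rw [← Matrix.fromCols_mul_fromRows, spectralEntropy_mul_comm, hgram,
    spectralEntropy_mul_comm Xᴴ, spectralEntropy_mul_comm Yᴴ]
  exact spectralEntropy_fromBlocks_le (Matrix.posSemidef_self_mul_conjTranspose X)
    (Matrix.posSemidef_self_mul_conjTranspose Y) hpsd

lemma spectralEntropy_le_spectralEntropy_add {M N : Matrix a a ℂ} (hM : M.PosSemidef)
    (hN : N.PosSemidef) (htr : M.trace.re = 1) :
    spectralEntropy M ≤ spectralEntropy (M + N) + N.trace.re * (1 + N.trace.re) := by
  obtain ⟨U, d, hU, -, hd⟩ := exists_unitary_conj_eq_diagonal (hM.add hN)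
  have hM' := hM.conjTranspose_mul_mul_same U
  have hN' := hN.conjTranspose_mul_mul_same U
  rw [← spectralEntropy_unitary_conj hU M, spectralEntropy_eq_sum_of_conj_eq_diagonal hU hd,
    ← trace_unitary_conj hU N]
  rw [← trace_unitary_conj hU M] at htr
  rw [Matrix.mul_add, Matrix.add_mul] at hd
  generalize Uᴴ * M * U = M at hM' hd htr ⊢
  generalize Uᴴ * N * U = N at hN' hd ⊢
  have hd_eq (j : a) : d j = (M j j).re + (N j j).re := by
    have h := congrArg Complex.re (congrFun₂ hd j j)
    rwa [Matrix.diagonal_apply_eq, Complex.ofReal_re, eq_comm, Matrix.add_apply,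
      Complex.add_re] at h
  have hle (j : a) : (M j j).re + (N j j).re ≤ 1 + N.trace.re :=
    htr ▸ add_le_add (re_diag_le_re_trace hM' j) (re_diag_le_re_trace hN' j)
  have htrace : N.trace.re * (1 + N.trace.re) = ∑ j, (N j j).re * (1 + N.trace.re) := by
    rw [← Finset.sum_mul, ← Complex.re_sum]
    rfl
  refine (spectralEntropy_le_sum_diag hM').trans ?_
  rw [htrace, ← Finset.sum_add_distrib]
  refine Finset.sum_le_sum fun j _ => ?_
  rw [hd_eq]
  exact negMulLog_le_negMulLog_add_add (re_diag_nonneg hM' j) (re_diag_nonneg hN' j) (hle j)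

end SpectralEntropy

section DensityMatrix

open scoped Kronecker

variable {a b : Type*} [Fintype a] [Fintype b]

/-- Density operators. -/
structure IsDensityMatrix (ρ : Matrix a a ℂ) : Prop where
  posSemidef : ρ.PosSemidef
  trace_eq_one : ρ.trace = 1

/-- The partial trace over the second tensor factor. -/
def traceRight {a b : Type*} [Fintype b] (ρ : Matrix (a × b) (a × b) ℂ) : Matrix a a ℂ :=
  Matrix.of fun x y => ∑ z, ρ (x, z) (y, z)

/-- The partial trace over the first tensor factor. -/
def traceLeft {a b : Type*} [Fintype a] (ρ : Matrix (a × b) (a × b) ℂ) : Matrix b b ℂ :=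
  Matrix.of fun x y => ∑ z, ρ (z, x) (z, y)

lemma trace_traceRight (ρ : Matrix (a × b) (a × b) ℂ) : (traceRight ρ).trace = ρ.trace := by
  simp only [Matrix.trace, Matrix.diag_apply, traceRight, Matrix.of_apply, Fintype.sum_prod_type]

lemma trace_traceLeft (ρ : Matrix (a × b) (a × b) ℂ) : (traceLeft ρ).trace = ρ.trace := by
  simp only [Matrix.trace, Matrix.diag_apply, traceLeft, Matrix.of_apply,
    Fintype.sum_prod_type_right]

lemma IsDensityMatrix.traceRight {ρ : Matrix (a × b) (a × b) ℂ} (hρ : IsDensityMatrix ρ) :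
    IsDensityMatrix (traceRight ρ) where
  posSemidef := by
    have hsum : _root_.traceRight ρ = ∑ z, ρ.submatrix (·, z) (·, z) := by
      ext x y
      rw [Matrix.sum_apply]
      rfl
    rw [hsum]
    exact Matrix.posSemidef_sum _ fun z _ => hρ.posSemidef.submatrix _
  trace_eq_one := by rw [trace_traceRight, hρ.trace_eq_one]

lemma IsDensityMatrix.traceLeft {ρ : Matrix (a × b) (a × b) ℂ} (hρ : IsDensityMatrix ρ) :
    IsDensityMatrix (traceLeft ρ) where
  posSemidef := by
    have hsum : _root_.traceLeft ρ = ∑ z, ρ.submatrix (z, ·) (z, ·) := by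
      ext x y
      rw [Matrix.sum_apply]
      rfl
    rw [hsum]
    exact Matrix.posSemidef_sum _ fun z _ => hρ.posSemidef.submatrix _
  trace_eq_one := by rw [trace_traceLeft, hρ.trace_eq_one]

lemma IsDensityMatrix.spectralEntropy_le_log_card [DecidableEq a] {ρ : Matrix a a ℂ}
    (hρ : IsDensityMatrix ρ) : spectralEntropy ρ ≤ Real.log (Fintype.card a) := by
  simpa [hρ.trace_eq_one] using spectralEntropy_le_trace_mul_log_card hρ.posSemidef

lemma IsDensityMatrix.unitary_conj [DecidableEq a] {ρ U : Matrix a a ℂ} (hρ : IsDensityMatrix ρ)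
    (hU : U * Uᴴ = 1) : IsDensityMatrix (Uᴴ * ρ * U) where
  posSemidef := hρ.posSemidef.conjTranspose_mul_mul_same U
  trace_eq_one := by rw [trace_unitary_conj hU, hρ.trace_eq_one]

lemma IsDensityMatrix.kronecker {ρ : Matrix a a ℂ} {σ : Matrix b b ℂ} (hρ : IsDensityMatrix ρ)
    (hσ : IsDensityMatrix σ) : IsDensityMatrix (ρ ⊗ₖ σ) where
  posSemidef := hρ.posSemidef.kronecker hσ.posSemidef
  trace_eq_one := by rw [Matrix.trace_kronecker, hρ.trace_eq_one, hσ.trace_eq_one, one_mul]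

lemma trace_traceRight_mul [DecidableEq b] (ρ : Matrix (a × b) (a × b) ℂ) (X : Matrix a a ℂ) :
    (traceRight ρ * X).trace = (ρ * (X ⊗ₖ (1 : Matrix b b ℂ))).trace := by
  simp only [Matrix.trace, Matrix.diag_apply, Matrix.mul_apply, traceRight, Matrix.of_apply,
    Matrix.kroneckerMap_apply, Matrix.one_apply, mul_ite, mul_one, mul_zero,
    Fintype.sum_prod_type, Finset.sum_ite_eq', Finset.mem_univ, if_true, Finset.sum_mul]
  exact Finset.sum_congr rfl fun x _ => Finset.sum_comm

lemma trace_traceLeft_mul [DecidableEq a] (ρ : Matrix (a × b) (a × b) ℂ) (X : Matrix b b ℂ) :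
    (traceLeft ρ * X).trace = (ρ * ((1 : Matrix a a ℂ) ⊗ₖ X)).trace := by
  simp only [Matrix.trace, Matrix.diag_apply, Matrix.mul_apply, traceLeft, Matrix.of_apply,
    Matrix.kroneckerMap_apply, Matrix.one_apply, ite_mul, one_mul, zero_mul, mul_ite, mul_zero,
    Fintype.sum_prod_type_right, Finset.sum_ite_eq', Finset.mem_univ, if_true, Finset.sum_mul]
  exact Finset.sum_congr rfl fun x _ => Finset.sum_comm

lemma traceRight_kronecker_conj [DecidableEq b] (ρ : Matrix (a × b) (a × b) ℂ) (U : Matrix a a ℂ)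
    {V : Matrix b b ℂ} (hV : V * Vᴴ = 1) :
    traceRight ((U ⊗ₖ V)ᴴ * ρ * (U ⊗ₖ V)) = Uᴴ * traceRight ρ * U := by
  refine Matrix.ext_iff_trace_mul_right.mpr fun X => ?_
  calc (traceRight ((U ⊗ₖ V)ᴴ * ρ * (U ⊗ₖ V)) * X).trace
      = (ρ * ((U ⊗ₖ V) * (X ⊗ₖ (1 : Matrix b b ℂ)) * (U ⊗ₖ V)ᴴ)).trace := by
        rw [trace_traceRight_mul, Matrix.mul_assoc, Matrix.mul_assoc, Matrix.trace_mul_comm]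
        simp only [Matrix.mul_assoc]
    _ = (ρ * ((U * X * Uᴴ) ⊗ₖ (1 : Matrix b b ℂ))).trace := by
        rw [Matrix.conjTranspose_kronecker, ← Matrix.mul_kronecker_mul,
          ← Matrix.mul_kronecker_mul, Matrix.mul_one, hV]
    _ = (Uᴴ * traceRight ρ * U * X).trace := by
        rw [← trace_traceRight_mul, ← Matrix.mul_assoc, Matrix.trace_mul_comm _ Uᴴ]
        simp only [Matrix.mul_assoc]

lemma traceLeft_kronecker_conj [DecidableEq a] (ρ : Matrix (a × b) (a × b) ℂ) {U : Matrix a a ℂ}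
    (V : Matrix b b ℂ) (hU : U * Uᴴ = 1) :
    traceLeft ((U ⊗ₖ V)ᴴ * ρ * (U ⊗ₖ V)) = Vᴴ * traceLeft ρ * V := by
  refine Matrix.ext_iff_trace_mul_right.mpr fun X => ?_
  calc (traceLeft ((U ⊗ₖ V)ᴴ * ρ * (U ⊗ₖ V)) * X).trace
      = (ρ * ((U ⊗ₖ V) * ((1 : Matrix a a ℂ) ⊗ₖ X) * (U ⊗ₖ V)ᴴ)).trace := by
        rw [trace_traceLeft_mul, Matrix.mul_assoc, Matrix.mul_assoc, Matrix.trace_mul_comm]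
        simp only [Matrix.mul_assoc]
    _ = (ρ * ((1 : Matrix a a ℂ) ⊗ₖ (V * X * Vᴴ))).trace := by
        rw [Matrix.conjTranspose_kronecker, ← Matrix.mul_kronecker_mul,
          ← Matrix.mul_kronecker_mul, Matrix.mul_one, hU]
    _ = (Vᴴ * traceLeft ρ * V * X).trace := by
        rw [← trace_traceLeft_mul, ← Matrix.mul_assoc, Matrix.trace_mul_comm _ Vᴴ]
        simp only [Matrix.mul_assoc]

variable [DecidableEq a] [DecidableEq b]

lemma kronecker_mul_conjTranspose_eq_one {U : Matrix a a ℂ} {V : Matrix b b ℂ}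
    (hU : U * Uᴴ = 1) (hV : V * Vᴴ = 1) : (U ⊗ₖ V) * (U ⊗ₖ V)ᴴ = 1 := by
  rw [Matrix.conjTranspose_kronecker, ← Matrix.mul_kronecker_mul, hU, hV, Matrix.one_kronecker_one]

lemma spectralEntropy_le_traceRight_add_traceLeft {ρ : Matrix (a × b) (a × b) ℂ}
    (hρ : IsDensityMatrix ρ) :
    spectralEntropy ρ ≤ spectralEntropy (traceRight ρ) + spectralEntropy (traceLeft ρ) := by
  obtain ⟨U, d, hU, -, hUρ⟩ := exists_unitary_conj_eq_diagonal hρ.traceRight.posSemidef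
  obtain ⟨V, e, hV, -, hVρ⟩ := exists_unitary_conj_eq_diagonal hρ.traceLeft.posSemidef
  have hUV := kronecker_mul_conjTranspose_eq_one hU hV
  rw [spectralEntropy_eq_sum_of_conj_eq_diagonal hU hUρ,
    spectralEntropy_eq_sum_of_conj_eq_diagonal hV hVρ, ← spectralEntropy_unitary_conj hUV]
  rw [← traceRight_kronecker_conj ρ U hV] at hUρ
  rw [← traceLeft_kronecker_conj ρ V hU] at hVρ
  replace hρ := hρ.unitary_conj hUV
  generalize (U ⊗ₖ V)ᴴ * ρ * (U ⊗ₖ V) = σ at hρ hUρ hVρ ⊢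
  have hd (i : a) : ∑ j, (σ (i, j) (i, j)).re = d i := by
    simpa [traceRight] using congrArg Complex.re (congrFun₂ hUρ i i)
  have he (j : b) : ∑ i, (σ (i, j) (i, j)).re = e j := by
    simpa [traceLeft] using congrArg Complex.re (congrFun₂ hVρ j j)
  have hσ1 : ∑ x, (σ x x).re = 1 := by
    simpa [Matrix.trace] using congrArg Complex.re hρ.trace_eq_one
  simpa only [hd, he] using (spectralEntropy_le_sum_diag hρ.posSemidef).trans
    (sum_negMulLog_prod_le (fun x => re_diag_nonneg hρ.posSemidef x) hσ1)

lemma IsDensityMatrix.sum_eq_one_of_conj_eq_diagonal {ρ U : Matrix a a ℂ} {d : a → ℝ}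
    (hρ : IsDensityMatrix ρ) (hU : U * Uᴴ = 1)
    (hd : Uᴴ * ρ * U = Matrix.diagonal fun i => (d i : ℂ)) : ∑ i, d i = 1 := by
  have h := (hρ.unitary_conj hU).trace_eq_one
  rw [hd, Matrix.trace_diagonal] at h
  exact_mod_cast h

lemma spectralEntropy_kronecker {ρ : Matrix a a ℂ} {σ : Matrix b b ℂ} (hρ : IsDensityMatrix ρ)
    (hσ : IsDensityMatrix σ) :
    spectralEntropy (ρ ⊗ₖ σ) = spectralEntropy ρ + spectralEntropy σ := by
  obtain ⟨U, d, hU, -, hd⟩ := exists_unitary_conj_eq_diagonal hρ.posSemidef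
  obtain ⟨V, e, hV, -, he⟩ := exists_unitary_conj_eq_diagonal hσ.posSemidef
  have hde : (U ⊗ₖ V)ᴴ * (ρ ⊗ₖ σ) * (U ⊗ₖ V) =
      Matrix.diagonal fun x => ((d x.1 * e x.2 : ℝ) : ℂ) := by
    rw [Matrix.conjTranspose_kronecker, ← Matrix.mul_kronecker_mul, ← Matrix.mul_kronecker_mul, hd,
      he, Matrix.diagonal_kronecker_diagonal]
    simp only [Complex.ofReal_mul]
  rw [spectralEntropy_eq_sum_of_conj_eq_diagonal (kronecker_mul_conjTranspose_eq_one hU hV) hde,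
    spectralEntropy_eq_sum_of_conj_eq_diagonal hU hd,
    spectralEntropy_eq_sum_of_conj_eq_diagonal hV he, Fintype.sum_prod_type]
  simp only [Real.negMulLog_mul, Finset.sum_add_distrib, ← Finset.sum_mul, ← Finset.mul_sum,
    hρ.sum_eq_one_of_conj_eq_diagonal hU hd, hσ.sum_eq_one_of_conj_eq_diagonal hV he, one_mul]

end DensityMatrix

section KroneckerPow

open scoped Kronecker

variable {a : Type*}

/-- The tensor power `ρ^{⊗n}`, indexed by functions on `Fin n`. -/
def kroneckerPow (ρ : Matrix a a ℂ) (n : ℕ) : Matrix (Fin n → a) (Fin n → a) ℂ :=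
  Matrix.of fun f g => ∏ k, ρ (f k) (g k)

lemma kroneckerPow_zero [DecidableEq a] (ρ : Matrix a a ℂ) : kroneckerPow ρ 0 = 1 := by
  ext f g
  rw [Subsingleton.elim f g, Matrix.one_apply_eq]
  simp [kroneckerPow]

lemma kroneckerPow_succ (ρ : Matrix a a ℂ) (n : ℕ) :
    kroneckerPow ρ (n + 1) = (ρ ⊗ₖ kroneckerPow ρ n).submatrix
      (Fin.consEquiv fun _ => a).symm (Fin.consEquiv fun _ => a).symm := by
  ext f g
  simp [kroneckerPow, Fin.prod_univ_succ, Fin.consEquiv, Fin.tail]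

variable [Fintype a]

lemma IsDensityMatrix.submatrix_equiv {b : Type*} [Fintype b] {ρ : Matrix a a ℂ}
    (hρ : IsDensityMatrix ρ) (e : b ≃ a) : IsDensityMatrix (ρ.submatrix e e) where
  posSemidef := hρ.posSemidef.submatrix e
  trace_eq_one := by
    rw [← hρ.trace_eq_one]
    exact e.sum_comp fun i => ρ i i

lemma IsDensityMatrix.kroneckerPow {ρ : Matrix a a ℂ} (hρ : IsDensityMatrix ρ) (n : ℕ) :
    IsDensityMatrix (kroneckerPow ρ n) := by
  classical
  induction n with
  | zero =>
    rw [kroneckerPow_zero]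
    exact ⟨Matrix.PosSemidef.one, by simp⟩
  | succ n ih =>
    rw [kroneckerPow_succ]
    exact (hρ.kronecker ih).submatrix_equiv _

lemma spectralEntropy_kroneckerPow [DecidableEq a] {ρ : Matrix a a ℂ} (hρ : IsDensityMatrix ρ)
    (n : ℕ) : spectralEntropy (kroneckerPow ρ n) = n * spectralEntropy ρ := by
  induction n with
  | zero =>
    have h := spectralEntropy_diagonal fun _ : Fin 0 → a => (1 : ℝ)
    simpa [kroneckerPow_zero] using h
  | succ n ih =>
    rw [kroneckerPow_succ, spectralEntropy_submatrix_equiv,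
      spectralEntropy_kronecker hρ (hρ.kroneckerPow n), ih]
    push_cast
    ring

end KroneckerPow

section ReducedState

open scoped Kronecker

variable {X Y : Type*}

/-- The reduced state on the first factor of the pure state with state vector `v`. -/
def reducedState [Fintype Y] (v : X × Y → ℂ) : Matrix X X ℂ :=
  Matrix.of fun x x' => ∑ y, v (x, y) * star (v (x', y))

/-- The state vector obtained from `v` by applying the operator `E` to the first factor. -/
def applyLeft {Z : Type*} [Fintype X] (E : Matrix Z X ℂ) (v : X × Y → ℂ) : Z × Y → ℂ :=
  fun p => ∑ x, E p.1 x * v (x, p.2)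

lemma reducedState_eq_mul_conjTranspose [Fintype Y] (v : X × Y → ℂ) :
    reducedState v = Matrix.of v.curry * (Matrix.of v.curry)ᴴ :=
  rfl

lemma reducedState_applyLeft_swap {Z : Type*} [Fintype X] [DecidableEq X] [Fintype Z]
    {E : Matrix Z X ℂ} (hE : Eᴴ * E = 1) (v : X × Y → ℂ) :
    reducedState (applyLeft E v ∘ Prod.swap) = reducedState (v ∘ Prod.swap) := by
  have h : Matrix.of (applyLeft E v ∘ Prod.swap).curry =
      Matrix.of (v ∘ Prod.swap).curry * Eᵀ := by
    ext y z
    exact Finset.sum_congr rfl fun x _ => mul_comm _ _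
  have hE' : Eᵀ * Eᵀᴴ = 1 := by
    change Eᵀ * Eᴴᵀ = 1
    rw [← Matrix.transpose_mul, hE, Matrix.transpose_one]
  rw [reducedState_eq_mul_conjTranspose, h, Matrix.conjTranspose_mul, Matrix.mul_assoc,
    ← Matrix.mul_assoc Eᵀ, hE', Matrix.one_mul, reducedState_eq_mul_conjTranspose]

variable [Fintype Y]

lemma reducedState_comp_prodMap_id {Z : Type*} [Fintype Z] (v : X × Y → ℂ) (e : Z ≃ Y) :
    reducedState (v ∘ Prod.map id e) = reducedState v := by
  ext x x'
  exact e.sum_comp fun y => v (x, y) * star (v (x', y))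

lemma reducedState_prod {X' Y' : Type*} [Fintype Y'] (u : X × Y → ℂ) (v : X' × Y' → ℂ) :
    reducedState (fun p : (X × X') × (Y × Y') => u (p.1.1, p.2.1) * v (p.1.2, p.2.2)) =
      reducedState u ⊗ₖ reducedState v := by
  ext p q
  simp only [reducedState, Matrix.of_apply, Matrix.kroneckerMap_apply, Finset.sum_mul_sum,
    Fintype.sum_prod_type, star_mul']
  exact Finset.sum_congr rfl fun _ _ => Finset.sum_congr rfl fun _ _ => by ring

lemma reducedState_add_reducedState_sub (u v : X × Y → ℂ) {α β : ℝ} (h : β ^ 2 = 1 + α ^ 2) :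
    reducedState u + reducedState (α • u - β • v) =
      reducedState v + reducedState (β • u - α • v) := by
  have h' : (β : ℂ) ^ 2 = 1 + (α : ℂ) ^ 2 := by exact_mod_cast h
  ext x x'
  simp only [reducedState, Matrix.add_apply, Matrix.of_apply, ← Finset.sum_add_distrib,
    Pi.sub_apply, Pi.smul_apply, Complex.real_smul, star_sub, star_mul', Complex.star_def,
    Complex.conj_ofReal]
  refine Finset.sum_congr rfl fun y _ => ?_
  linear_combination (v (x, y) * (starRingEnd ℂ) (v (x', y)) -
    u (x, y) * (starRingEnd ℂ) (u (x', y))) * h'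

lemma reducedState_posSemidef [Finite X] (v : X × Y → ℂ) : (reducedState v).PosSemidef :=
  Matrix.posSemidef_self_mul_conjTranspose (Matrix.of v.curry)

variable [Fintype X]

lemma trace_reducedState (v : X × Y → ℂ) : (reducedState v).trace = star v ⬝ᵥ v := by
  simp only [Matrix.trace, Matrix.diag_apply, reducedState, Matrix.of_apply, dotProduct,
    Pi.star_apply, Fintype.sum_prod_type, mul_comm]

lemma isDensityMatrix_reducedState {v : X × Y → ℂ} (hv : star v ⬝ᵥ v = 1) :
    IsDensityMatrix (reducedState v) :=
  ⟨reducedState_posSemidef v, by rw [trace_reducedState, hv]⟩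

lemma spectralEntropy_reducedState_swap [DecidableEq X] [DecidableEq Y] (v : X × Y → ℂ) :
    spectralEntropy (reducedState (v ∘ Prod.swap)) = spectralEntropy (reducedState v) := by
  have h : reducedState (v ∘ Prod.swap) = ((Matrix.of v.curry)ᴴ * Matrix.of v.curry)ᵀ := by
    rw [Matrix.transpose_mul]
    rfl
  rw [h, spectralEntropy_transpose, spectralEntropy_mul_comm, reducedState_eq_mul_conjTranspose]

variable {Z : Type*}

lemma reducedState_applyLeft (E : Matrix Z X ℂ) (v : X × Y → ℂ) :
    reducedState (applyLeft E v) = E * reducedState v * Eᴴ := by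
  have h : Matrix.of (applyLeft E v).curry = E * Matrix.of v.curry := rfl
  simp only [reducedState_eq_mul_conjTranspose, h, Matrix.conjTranspose_mul, Matrix.mul_assoc]

variable [DecidableEq X] [Fintype Z]

lemma spectralEntropy_reducedState_applyLeft [DecidableEq Z] {E : Matrix Z X ℂ}
    (hE : Eᴴ * E = 1) (v : X × Y → ℂ) :
    spectralEntropy (reducedState (applyLeft E v)) = spectralEntropy (reducedState v) := by
  rw [reducedState_applyLeft, spectralEntropy_isometry_conj hE]

lemma applyLeft_dotProduct_self {E : Matrix Z X ℂ} (hE : Eᴴ * E = 1) (v : X × Y → ℂ) :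
    star (applyLeft E v) ⬝ᵥ applyLeft E v = star v ⬝ᵥ v := by
  rw [← trace_reducedState, reducedState_applyLeft, Matrix.trace_mul_comm, ← Matrix.mul_assoc, hE,
    Matrix.one_mul, trace_reducedState]

end ReducedState

section Continuity

lemma re_dotProduct_smul_sub_smul {ι : Type*} [Fintype ι] {u v : ι → ℂ} (hu : star u ⬝ᵥ u = 1)
    (hv : star v ⬝ᵥ v = 1) (α β : ℝ) :
    (star (α • u - β • v) ⬝ᵥ (α • u - β • v)).re =
      α ^ 2 + β ^ 2 - 2 * (α * β) * (star u ⬝ᵥ v).re := by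
  have hvu : (star v ⬝ᵥ u).re = (star u ⬝ᵥ v).re := by
    rw [star_dotProduct, Complex.star_def, Complex.conj_re]
  simp only [star_sub, star_smul, star_trivial, sub_dotProduct, dotProduct_sub, smul_dotProduct,
    dotProduct_smul, hu, hv, Complex.sub_re, Complex.smul_re, hvu, Complex.one_re, smul_eq_mul]
  ring

/-- The continuity bound for the entropy (in nats) of a `d`-dimensional reduced state when the
overlap of the global pure states is at least `1 - θ ^ 2 / 3`. -/
noncomputable def entropyModulus (d : ℕ) (θ : ℝ) : ℝ :=
  θ * Real.log d + Real.negMulLog θ + θ * (1 + θ)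

variable {X Y : Type*} [Fintype X] [DecidableEq X] [Fintype Y]

lemma spectralEntropy_reducedState_le_add_entropyModulus {u v : X × Y → ℂ}
    (hu : star u ⬝ᵥ u = 1) (hv : star v ⬝ᵥ v = 1) {θ : ℝ} (hθ0 : 0 < θ) (hθ : θ ≤ Real.exp (-1))
    (hF : 1 - θ ^ 2 / 3 ≤ (star u ⬝ᵥ v).re) :
    spectralEntropy (reducedState v) ≤
      spectralEntropy (reducedState u) + entropyModulus (Fintype.card X) θ := by
  have hθ1 : θ ≤ 1 := hθ.trans (Real.exp_le_one_iff.mpr (by norm_num))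
  obtain ⟨α, β, hαβ, ht⟩ := exists_hyperbolic_coeffs hθ0 hθ1 hF
  set t := α ^ 2 + β ^ 2 - 2 * (α * β) * (star u ⬝ᵥ v).re with ht_def
  have htr : (reducedState (α • u - β • v)).trace.re = t := by
    rw [trace_reducedState, re_dotProduct_smul_sub_smul hu hv]
  have htr' : (reducedState (β • u - α • v)).trace.re = t := by
    rw [trace_reducedState, re_dotProduct_smul_sub_smul hu hv, ht_def]
    ring
  have ht0 : 0 ≤ t := htr ▸ (Complex.nonneg_iff.mp (reducedState_posSemidef _).trace_nonneg).1
  have : 0 ≤ Real.log (Fintype.card X) := Real.log_natCast_nonneg _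
  have h1 := spectralEntropy_le_spectralEntropy_add (reducedState_posSemidef v)
    (reducedState_posSemidef (β • u - α • v)) (by simp [trace_reducedState, hv])
  have h2 := spectralEntropy_add_le (reducedState_posSemidef u)
    (reducedState_posSemidef (α • u - β • v))
  have h3 := spectralEntropy_le_trace_mul_log_card (reducedState_posSemidef (α • u - β • v))
  rw [htr'] at h1
  rw [htr] at h3
  rw [reducedState_add_reducedState_sub u v hαβ] at h2
  calc spectralEntropy (reducedState v)
      ≤ spectralEntropy (reducedState u) +
          (t * Real.log (Fintype.card X) + Real.negMulLog t + t * (1 + t)) := by linarith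
    _ ≤ spectralEntropy (reducedState u) + entropyModulus (Fintype.card X) θ := by
      unfold entropyModulus
      gcongr
      exact negMulLog_le_negMulLog_of_le_exp_neg_one ht0 ht hθ

end Continuity

section Decoupling

/-- The state vector `v` of a four-party system `(W × X) × (Y × Z)`, regarded as a vector of the
bipartite system with the cut `X Z | W Y`. -/
def regroup {W X Y Z : Type*} (v : (W × X) × (Y × Z) → ℂ) : (X × Z) × (W × Y) → ℂ :=
  fun p => v ((p.2.1, p.1.1), (p.2.2, p.1.2))

section Regroup

variable {W X Y Z : Type*} [Fintype Z]

lemma traceRight_reducedState_regroup [Fintype W] [Fintype Y] (v : (W × X) × (Y × Z) → ℂ) :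
    traceRight (reducedState (regroup v)) = traceLeft (reducedState v) := by
  ext x x'
  simp only [traceRight, traceLeft, reducedState, regroup, Matrix.of_apply, Fintype.sum_prod_type]
  rw [Finset.sum_comm]
  exact Finset.sum_congr rfl fun w _ => Finset.sum_comm

lemma traceRight_reducedState_regroup_swap [Fintype X] [Fintype Y]
    (v : (W × X) × (Y × Z) → ℂ) :
    traceRight (reducedState (regroup v ∘ Prod.swap)) = traceRight (reducedState v) := by
  ext w w'
  simp only [traceRight, reducedState, regroup, Matrix.of_apply, Function.comp_apply, Prod.swap,
    Fintype.sum_prod_type]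
  exact Finset.sum_comm

lemma traceLeft_reducedState_regroup_swap [Fintype W] [Fintype X]
    (v : (W × X) × (Y × Z) → ℂ) :
    traceLeft (reducedState (regroup v ∘ Prod.swap)) =
      traceRight (reducedState (v ∘ Prod.swap)) := by
  ext y y'
  simp only [traceRight, traceLeft, reducedState, regroup, Matrix.of_apply, Function.comp_apply,
    Prod.swap, Fintype.sum_prod_type]
  rw [Finset.sum_comm_cycle]

variable [Fintype W] [Fintype X] [Fintype Y]

lemma regroup_dotProduct_self (v : (W × X) × (Y × Z) → ℂ) :
    star (regroup v) ⬝ᵥ regroup v = star v ⬝ᵥ v :=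
  comp_equiv_dotProduct_comp_equiv (star v) v
    ((Equiv.prodComm (X × Z) (W × Y)).trans (Equiv.prodProdProdComm W Y X Z))

variable [DecidableEq W] [DecidableEq X] [DecidableEq Y] [DecidableEq Z]

lemma spectralEntropy_add_regroup_le {v : (W × X) × (Y × Z) → ℂ} (hv : star v ⬝ᵥ v = 1) :
    spectralEntropy (reducedState v) + spectralEntropy (reducedState (regroup v)) ≤
      spectralEntropy (traceLeft (reducedState v)) +
        spectralEntropy (traceRight (reducedState (v ∘ Prod.swap))) +
        2 * Real.log (Fintype.card W) := by
  have hWX := isDensityMatrix_reducedState hv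
  have hWY : IsDensityMatrix (reducedState (regroup v ∘ Prod.swap)) := by
    refine isDensityMatrix_reducedState ?_
    rw [← hv, ← regroup_dotProduct_self v]
    exact comp_equiv_dotProduct_comp_equiv (star (regroup v)) (regroup v) (Equiv.prodComm _ _)
  have hsubWX := spectralEntropy_le_traceRight_add_traceLeft hWX
  have hsubWY := spectralEntropy_le_traceRight_add_traceLeft hWY
  rw [spectralEntropy_reducedState_swap, traceRight_reducedState_regroup_swap,
    traceLeft_reducedState_regroup_swap] at hsubWY
  have hlog := hWX.traceRight.spectralEntropy_le_log_card
  linarith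

end Regroup

lemma reducedState_mul_right {X Y Z : Type*} [Fintype Y] [Fintype Z] (v : X × Y → ℂ) {w : Z → ℂ}
    (hw : star w ⬝ᵥ w = 1) :
    reducedState (fun p : X × (Y × Z) => v (p.1, p.2.1) * w p.2.2) = reducedState v := by
  ext x x'
  have hw' : ∑ z, w z * star (w z) = 1 := by
    rw [← hw]
    exact Finset.sum_congr rfl fun z _ => mul_comm _ _
  calc ∑ k : Y × Z, v (x, k.1) * w k.2 * star (v (x', k.1) * w k.2)
      = ∑ y, v (x, y) * star (v (x', y)) * ∑ z, w z * star (w z) := by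
        rw [Fintype.sum_prod_type]
        simp only [Finset.mul_sum, star_mul']
        exact Finset.sum_congr rfl fun _ _ => Finset.sum_congr rfl fun _ _ => by ring
    _ = ∑ y, v (x, y) * star (v (x', y)) := by simp only [hw', mul_one]

/-- The state vector of `Ω ⊗ ψ` after exchanging the pair of systems `T P` of `Ω` with `ψ`, with
the cut `W T | rest`. -/
def exchange {W T E P : Type*} (Ω : (W × T) × (E × P) → ℂ) (ψ : T × P → ℂ) :
    (W × T) × ((E × P) × (T × P)) → ℂ :=
  fun p => Ω ((p.1.1, p.2.2.1), (p.2.1.1, p.2.2.2)) * ψ (p.1.2, p.2.1.2)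

section Exchange

open scoped Kronecker

variable {W T E P : Type*} [Fintype T] [Fintype E] [Fintype P]

lemma reducedState_exchange (Ω : (W × T) × (E × P) → ℂ) (ψ : T × P → ℂ) :
    reducedState (exchange Ω ψ) = traceRight (reducedState Ω) ⊗ₖ reducedState ψ := by
  let e : (E × P) × (T × P) ≃ (T × (E × P)) × P :=
    { toFun k := ((k.2.1, (k.1.1, k.2.2)), k.1.2)
      invFun k := ((k.1.2.1, k.2), (k.1.1, k.1.2.2)) }
  have hΩ : traceRight (reducedState Ω) =
      reducedState fun p : W × (T × (E × P)) => Ω ((p.1, p.2.1), p.2.2) := by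
    ext w w'
    exact (Fintype.sum_prod_type fun k : T × (E × P) =>
      Ω ((w, k.1), k.2) * star (Ω ((w', k.1), k.2))).symm
  rw [hΩ, ← reducedState_prod, ← reducedState_comp_prodMap_id _ e]
  rfl

variable [Fintype W]

lemma dotProduct_exchange (Ω : (W × T) × (E × P) → ℂ) (ψ : T × P → ℂ) :
    star (fun p : (W × T) × ((E × P) × (T × P)) => Ω (p.1, p.2.1) * ψ p.2.2) ⬝ᵥ exchange Ω ψ =
      star ψ ⬝ᵥ reducedState (regroup Ω) *ᵥ ψ := by
  let e : (W × T) × ((E × P) × (T × P)) ≃ (T × P) × ((T × P) × (W × E)) :=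
    { toFun z := (z.2.2, ((z.1.2, z.2.1.2), (z.1.1, z.2.1.1)))
      invFun y := ((y.2.2.1, y.2.1.1), ((y.2.2.2, y.2.1.2), y.1)) }
  have hrhs : star ψ ⬝ᵥ reducedState (regroup Ω) *ᵥ ψ =
      ∑ y : (T × P) × ((T × P) × (W × E)), star (ψ y.1) *
        (regroup Ω (y.1, y.2.2) * star (regroup Ω (y.2.1, y.2.2)) * ψ y.2.1) := by
    simp only [dotProduct, Matrix.mulVec, reducedState, Matrix.of_apply, Finset.mul_sum,
      Finset.sum_mul, Pi.star_apply, Fintype.sum_prod_type]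
  rw [hrhs, ← e.sum_comp]
  refine Finset.sum_congr rfl fun z _ => ?_
  simp only [e, Pi.star_apply, Equiv.coe_fn_mk, exchange, regroup, star_mul']
  ring

variable [DecidableEq W] [DecidableEq T]

lemma spectralEntropy_add_le_of_fidelity {Ω : (W × T) × (E × P) → ℂ} {ψ : T × P → ℂ}
    (hΩ : star Ω ⬝ᵥ Ω = 1) (hψ : star ψ ⬝ᵥ ψ = 1) {θ : ℝ} (hθ0 : 0 < θ) (hθ : θ ≤ Real.exp (-1))
    (hF : 1 - θ ^ 2 / 3 ≤ (star ψ ⬝ᵥ reducedState (regroup Ω) *ᵥ ψ).re) :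
    spectralEntropy (traceRight (reducedState Ω)) + spectralEntropy (reducedState ψ) ≤
      spectralEntropy (reducedState Ω) + entropyModulus (Fintype.card (W × T)) θ := by
  have hρ := (isDensityMatrix_reducedState hΩ).traceRight
  have hσ := isDensityMatrix_reducedState hψ
  rw [← spectralEntropy_kronecker hρ hσ, ← reducedState_exchange, ← reducedState_mul_right Ω hψ]
  refine spectralEntropy_reducedState_le_add_entropyModulus ?_ ?_ hθ0 hθ ?_
  · rw [← trace_reducedState, reducedState_mul_right Ω hψ, trace_reducedState, hΩ]
  · rw [← trace_reducedState, reducedState_exchange, (hρ.kronecker hσ).trace_eq_one]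
  · rwa [dotProduct_exchange]

end Exchange

end Decoupling

section MutualInformation

variable {A B R : Type}

/-- The state vector `v` on `A ⊗ (B ⊗ R)`, written on `R ⊗ (A ⊗ B)`. -/
def referenceFirst (v : A × (B × R) → ℂ) : R × (A × B) → ℂ :=
  fun x => v (x.2.1, (x.2.2, x.1))

/-- The state vector `v` on `A ⊗ (B ⊗ R)`, written on `B ⊗ (A ⊗ R)`. -/
def bobFirst (v : A × (B × R) → ℂ) : B × (A × R) → ℂ :=
  fun x => v (x.2.1, (x.1, x.2.2))

/-- Reduced state on `B` of a state vector on `A ⊗ (B ⊗ R)`. -/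
noncomputable def redB [Fintype A] [Fintype R] (v : A × (B × R) → ℂ) : Matrix B B ℂ :=
  reducedState (bobFirst v)

lemma redB_eq_traceRight [Fintype A] [Fintype R] (v : A × (B × R) → ℂ) :
    redB v = traceRight (reducedState (v ∘ Prod.swap)) := by
  ext b b'
  exact Fintype.sum_prod_type_right fun x : A × R =>
    v (x.1, (b, x.2)) * star (v (x.1, (b', x.2)))

lemma redAR_isHermitian [Fintype B] (v : A × (B × R) → ℂ) : (redAR v).IsHermitian :=
  Matrix.isHermitian_mul_conjTranspose_self
    (Matrix.of fun (x : A × R) (b : B) => v (x.1, (b, x.2)))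

variable [Fintype A] [Fintype B]

lemma redR_eq_reducedState (v : A × (B × R) → ℂ) : redR v = reducedState (referenceFirst v) := by
  ext r r'
  exact (Fintype.sum_prod_type fun x : A × B =>
    v (x.1, (x.2, r)) * star (v (x.1, (x.2, r')))).symm

variable [Fintype R]

lemma referenceFirst_dotProduct_self (v : A × (B × R) → ℂ) :
    star (referenceFirst v) ⬝ᵥ referenceFirst v = star v ⬝ᵥ v :=
  comp_equiv_dotProduct_comp_equiv (star v) v
    ((Equiv.prodComm R (A × B)).trans (Equiv.prodAssoc A B R))

lemma isDensityMatrix_redA {v : A × (B × R) → ℂ} (hv : star v ⬝ᵥ v = 1) :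
    IsDensityMatrix (redA v) :=
  isDensityMatrix_reducedState hv

lemma isDensityMatrix_redR {v : A × (B × R) → ℂ} (hv : star v ⬝ᵥ v = 1) :
    IsDensityMatrix (redR v) := by
  rw [redR_eq_reducedState]
  exact isDensityMatrix_reducedState ((referenceFirst_dotProduct_self v).trans hv)

lemma isDensityMatrix_redB {v : A × (B × R) → ℂ} (hv : star v ⬝ᵥ v = 1) :
    IsDensityMatrix (redB v) := by
  rw [redB_eq_traceRight]
  refine (isDensityMatrix_reducedState ?_).traceRight
  rw [← hv]
  exact comp_equiv_dotProduct_comp_equiv (star v) v (Equiv.prodComm (B × R) A)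

variable [DecidableEq A] [DecidableEq R]

/-- The mutual information `I(A;R)` of a state vector on `A ⊗ (B ⊗ R)`, in nats. -/
noncomputable def mutualInfo (v : A × (B × R) → ℂ) : ℝ :=
  spectralEntropy (redA v) + spectralEntropy (redR v) - spectralEntropy (redAR v)

lemma vnEntropy_redA_add_redR_sub_redAR {v : A × (B × R) → ℂ} (hv : star v ⬝ᵥ v = 1) :
    vnEntropy (redA v) + vnEntropy (redR v) - vnEntropy (redAR v) = mutualInfo v / Real.log 2 := by
  rw [vnEntropy_eq_spectralEntropy_div (isDensityMatrix_redA hv).posSemidef.isHermitian,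
    vnEntropy_eq_spectralEntropy_div (isDensityMatrix_redR hv).posSemidef.isHermitian,
    vnEntropy_eq_spectralEntropy_div (redAR_isHermitian v), mutualInfo]
  ring

lemma spectralEntropy_redAR [DecidableEq B] (v : A × (B × R) → ℂ) :
    spectralEntropy (redAR v) = spectralEntropy (redB v) := by
  let w : (A × R) × B → ℂ := fun x => v (x.1.1, (x.2, x.1.2))
  exact (spectralEntropy_reducedState_swap w).symm

lemma spectralEntropy_redR_le [DecidableEq B] {v : A × (B × R) → ℂ} (hv : star v ⬝ᵥ v = 1) :
    spectralEntropy (redR v) ≤ spectralEntropy (redA v) + spectralEntropy (redB v) := by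
  let w : (A × B) × R → ℂ := v ∘ Equiv.prodAssoc A B R
  have hw : star w ⬝ᵥ w = 1 := by
    rw [← hv]
    exact comp_equiv_dotProduct_comp_equiv (star v) v (Equiv.prodAssoc A B R)
  have hA : traceRight (reducedState w) = redA v := by
    ext a a'
    exact (Fintype.sum_prod_type fun x : B × R => v (a, x) * star (v (a', x))).symm
  have hB : traceLeft (reducedState w) = redB v := by
    ext b b'
    exact (Fintype.sum_prod_type fun x : A × R =>
      v (x.1, (b, x.2)) * star (v (x.1, (b', x.2)))).symm
  rw [redR_eq_reducedState, ← hA, ← hB]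
  exact (spectralEntropy_reducedState_swap w).trans_le
    (spectralEntropy_le_traceRight_add_traceLeft (isDensityMatrix_reducedState hw))

lemma mutualInfo_le_two_mul_log_card {v : A × (B × R) → ℂ} (hv : star v ⬝ᵥ v = 1) :
    mutualInfo v ≤ 2 * Real.log (Fintype.card A) := by
  classical
  have hA := (isDensityMatrix_redA hv).spectralEntropy_le_log_card
  have hR := spectralEntropy_redR_le hv
  rw [mutualInfo, spectralEntropy_redAR]
  linarith

/-- The state vector, written on `W ⊗ R` and its complement, after `A` has been encoded by `EA`
and the compressed system has been processed jointly with `B` by `G`. -/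
noncomputable def recoveredState {C W S : Type*} [Fintype C] (EA : Matrix (C × W) A ℂ)
    (G : Matrix S (C × B) ℂ) (v : A × (B × R) → ℂ) : (W × R) × S → ℂ :=
  applyLeft G (regroup (applyLeft EA v) ∘ Prod.swap) ∘ Prod.swap

variable [DecidableEq B] {C W E : Type*} [Fintype C] [DecidableEq C] [Fintype W] [Fintype E]

theorem mutualInfo_le_of_fidelity {EA : Matrix (C × W) A ℂ} (hEA : EAᴴ * EA = 1)
    {G : Matrix (E × (A × B)) (C × B) ℂ} (hG : Gᴴ * G = 1) {v : A × (B × R) → ℂ}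
    (hv : star v ⬝ᵥ v = 1) {θ : ℝ} (hθ0 : 0 < θ) (hθ : θ ≤ Real.exp (-1))
    (hF : 1 - θ ^ 2 / 3 ≤ (star (referenceFirst v) ⬝ᵥ
      reducedState (regroup (recoveredState EA G v)) *ᵥ referenceFirst v).re) :
    mutualInfo v ≤
      2 * Real.log (Fintype.card C) + entropyModulus (Fintype.card (W × R)) θ := by
  classical
  have hencoded : star (applyLeft EA v) ⬝ᵥ applyLeft EA v = 1 :=
    (applyLeft_dotProduct_self hEA v).trans hv
  have hred : reducedState (recoveredState EA G v) = reducedState (regroup (applyLeft EA v)) :=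
    reducedState_applyLeft_swap hG _
  have hrecovered : star (recoveredState EA G v) ⬝ᵥ recoveredState EA G v = 1 := by
    rw [← trace_reducedState, hred, trace_reducedState, regroup_dotProduct_self, hencoded]
  have hsub := spectralEntropy_add_regroup_le hencoded
  rw [spectralEntropy_reducedState_applyLeft hEA, reducedState_applyLeft_swap hEA] at hsub
  have hdecoupled := spectralEntropy_add_le_of_fidelity hrecovered
    ((referenceFirst_dotProduct_self v).trans hv) hθ0 hθ hF
  rw [hred, traceRight_reducedState_regroup] at hdecoupled
  have hA : redA v = reducedState v := rfl
  rw [mutualInfo, spectralEntropy_redAR, redB_eq_traceRight, redR_eq_reducedState, hA]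
  linarith

end MutualInformation

section Code

open scoped Kronecker

/-- Bob's encoder followed by the decoder, as an operator on Alice's message and Bob's source. The
discarded systems `W_B W_C` come first in the output. -/
def jointDecoder {B C C' W W' S : Type*} [Fintype C'] (EB : Matrix (C' × W) B ℂ)
    (D : Matrix (S × W') (C × C') ℂ) : Matrix ((W × W') × S) (C × B) ℂ :=
  Matrix.of fun x y => ∑ c, D (x.2, x.1.2) (y.1, c) * EB (c, x.1.1) y.2

lemma jointDecoder_isometry {B C C' W W' S : Type*} [DecidableEq B] [Finite C]
    [DecidableEq C] [Fintype C'] [DecidableEq C'] [Fintype W] [Fintype W'] [Fintype S]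
    {EB : Matrix (C' × W) B ℂ} (hEB : EBᴴ * EB = 1) {D : Matrix (S × W') (C × C') ℂ}
    (hD : Dᴴ * D = 1) : (jointDecoder EB D)ᴴ * jointDecoder EB D = 1 := by
  classical
  have := Fintype.ofFinite C
  let e : (W × W') × S ≃ (S × W') × W :=
    { toFun x := ((x.2, x.1.2), x.1.1)
      invFun x := ((x.2, x.1.2), x.1.1) }
  set V := (1 : Matrix C C ℂ) ⊗ₖ EB with hV_def
  set U := (D ⊗ₖ (1 : Matrix W W ℂ)).submatrix e (Equiv.prodAssoc C C' W).symm with hU_def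
  have hV : Vᴴ * V = 1 := by
    rw [hV_def, Matrix.conjTranspose_kronecker, ← Matrix.mul_kronecker_mul, hEB,
      Matrix.conjTranspose_one, Matrix.one_mul, Matrix.one_kronecker_one]
  have hU : Uᴴ * U = 1 := by
    rw [hU_def, Matrix.conjTranspose_submatrix, Matrix.submatrix_mul_equiv,
      Matrix.conjTranspose_kronecker, ← Matrix.mul_kronecker_mul, hD, Matrix.conjTranspose_one,
      Matrix.one_mul, Matrix.one_kronecker_one, Matrix.submatrix_one_equiv]
  have hG : jointDecoder EB D = U * V := by
    ext x y
    simp [jointDecoder, hU_def, hV_def, e, Matrix.mul_apply, Fintype.sum_prod_type,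
      Matrix.one_apply]
  rw [hG, Matrix.conjTranspose_mul, Matrix.mul_assoc, ← Matrix.mul_assoc Uᴴ, hU, Matrix.one_mul, hV]

/-- The `n`-copy state vector `|φ⟩^{⊗n}`, written on `A^{⊗n} ⊗ (B^{⊗n} ⊗ R^{⊗n})`. -/
noncomputable def iidTensor {A B R : Type*} (φ : A × (B × R) → ℂ) (n : ℕ) :
    (Fin n → A) × ((Fin n → B) × (Fin n → R)) → ℂ :=
  fun p => ∏ k, φ (p.1 k, (p.2.1 k, p.2.2 k))

variable {A B R : Type} [Fintype B] [Fintype R]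

lemma reducedState_iidTensor (φ : A × (B × R) → ℂ) (n : ℕ) :
    reducedState (iidTensor φ n) = kroneckerPow (reducedState φ) n := by
  ext f f'
  simp only [reducedState, kroneckerPow, iidTensor, Matrix.of_apply, star_prod,
    ← Finset.prod_mul_distrib]
  rw [Finset.prod_univ_sum, Fintype.piFinset_univ]
  exact ((Equiv.arrowProdEquivProdArrow (Fin n) (fun _ => B) fun _ => R).sum_comp fun g =>
    ∏ k, φ (f k, (g.1 k, g.2 k)) * star (φ (f' k, (g.1 k, g.2 k)))).symm

variable [Fintype A]

lemma iidTensor_dotProduct_self {φ : A × (B × R) → ℂ} (hφ : star φ ⬝ᵥ φ = 1) (n : ℕ) :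
    star (iidTensor φ n) ⬝ᵥ iidTensor φ n = 1 := by
  rw [← trace_reducedState, reducedState_iidTensor,
    ((isDensityMatrix_reducedState hφ).kroneckerPow n).trace_eq_one]

lemma mutualInfo_iidTensor [DecidableEq A] [DecidableEq R] {φ : A × (B × R) → ℂ}
    (hφ : star φ ⬝ᵥ φ = 1) (n : ℕ) : mutualInfo (iidTensor φ n) = n * mutualInfo φ := by
  classical
  have hA : redA (iidTensor φ n) = kroneckerPow (redA φ) n := reducedState_iidTensor φ n
  have hB : redB (iidTensor φ n) = kroneckerPow (redB φ) n :=
    reducedState_iidTensor (bobFirst φ) n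
  have hR : redR (iidTensor φ n) = kroneckerPow (redR φ) n := by
    rw [redR_eq_reducedState, redR_eq_reducedState]
    exact reducedState_iidTensor (referenceFirst φ) n
  rw [mutualInfo, mutualInfo, spectralEntropy_redAR, spectralEntropy_redAR, hA, hB, hR,
    spectralEntropy_kroneckerPow (isDensityMatrix_redA hφ),
    spectralEntropy_kroneckerPow (isDensityMatrix_redB hφ),
    spectralEntropy_kroneckerPow (isDensityMatrix_redR hφ)]
  ring

variable [DecidableEq R] {n : ℕ} {γA ωA γB ωB ωC : Type} [Fintype γA] [Fintype γB]

lemma codeMap_mulVec_referenceFirst (EA : Matrix (γA × ωA) (Fin n → A) ℂ)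
    (EB : Matrix (γB × ωB) (Fin n → B) ℂ)
    (D : Matrix (((Fin n → A) × (Fin n → B)) × ωC) (γA × γB) ℂ)
    (v : (Fin n → A) × ((Fin n → B) × (Fin n → R)) → ℂ) :
    codeMap EA EB D *ᵥ referenceFirst v =
      regroup (recoveredState EA (jointDecoder EB D) v) ∘
        Prod.map id (Equiv.prodAssoc ωA ωB ωC) := by
  ext ⟨⟨r, p⟩, ⟨wA, wB⟩, wC⟩
  have hrecovered : (regroup (recoveredState EA (jointDecoder EB D) v) ∘
      Prod.map id (Equiv.prodAssoc ωA ωB ωC)) ((r, p), ((wA, wB), wC)) =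
      ∑ x : γA × (Fin n → B), jointDecoder EB D ((wB, wC), p) x *
        ∑ a, EA (x.1, wA) a * v (a, (x.2, r)) := rfl
  rw [hrecovered]
  simp only [Matrix.mulVec, dotProduct, codeMap, Matrix.of_apply, ite_mul, zero_mul,
    Fintype.sum_prod_type, Finset.sum_ite_irrel, Finset.sum_const_zero, Finset.sum_ite_eq,
    Finset.mem_univ, if_true, jointDecoder, referenceFirst, Finset.sum_mul, Finset.mul_sum]
  rw [Finset.sum_comm_cycle]
  refine Finset.sum_congr rfl fun cA _ => Finset.sum_comm.trans ?_
  refine Finset.sum_congr rfl fun b _ => Finset.sum_congr rfl fun a _ => ?_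
  exact Finset.sum_congr rfl fun cB _ => by ring

variable [Fintype ωA] [Fintype ωB] [Fintype ωC]

lemma codeFidelity_eq (φ : A × (B × R) → ℂ) (EA : Matrix (γA × ωA) (Fin n → A) ℂ)
    (EB : Matrix (γB × ωB) (Fin n → B) ℂ)
    (D : Matrix (((Fin n → A) × (Fin n → B)) × ωC) (γA × γB) ℂ) :
    codeFidelity φ EA EB D = (star (referenceFirst (iidTensor φ n)) ⬝ᵥ
      reducedState (regroup (recoveredState EA (jointDecoder EB D) (iidTensor φ n))) *ᵥ
        referenceFirst (iidTensor φ n)).re := by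
  have hψ : iidVec φ n = referenceFirst (iidTensor φ n) := rfl
  rw [← reducedState_comp_prodMap_id _ (Equiv.prodAssoc ωA ωB ωC),
    ← codeMap_mulVec_referenceFirst, codeFidelity, hψ, Matrix.mul_vecMulVec, Matrix.vecMulVec_mul,
    ← Matrix.star_mulVec]
  rfl

end Code

section Rate

lemma log_natCast_le_mul_log {d k n : ℕ} (h : d ≤ k ^ n) :
    Real.log d ≤ n * Real.log k := by
  rcases d.eq_zero_or_pos with rfl | hd
  · simpa using mul_nonneg n.cast_nonneg (Real.log_natCast_nonneg k)
  · rw [← Real.log_pow]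
    exact Real.log_le_log (by exact_mod_cast hd) (by exact_mod_cast h)

lemma two_le_log_natCast {k : ℕ} (hk : 8 ≤ k) : 2 ≤ Real.log k := by
  have hlog8 : Real.log 8 = 3 * Real.log 2 := by
    rw [show (8 : ℝ) = 2 ^ 3 by norm_num, Real.log_pow, Nat.cast_ofNat]
  have hmono : Real.log 8 ≤ Real.log k := Real.log_le_log (by norm_num) (by exact_mod_cast hk)
  linarith [Real.log_two_gt_d9]

lemma entropyModulus_le {d k n : ℕ} (hd : d ≤ k ^ n) (hk : 8 ≤ k) (hn : 1 ≤ n) {θ : ℝ}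
    (hθ0 : 0 < θ) (hθ : 2 * θ ≤ Real.exp (-1)) :
    entropyModulus d θ ≤ 2 * θ * n * Real.log k + Real.negMulLog (2 * θ) := by
  have hexp : Real.exp (-1) ≤ 1 := Real.exp_le_one_iff.mpr (by norm_num)
  have hn' : (1 : ℝ) ≤ n := by exact_mod_cast hn
  have hlog : 1 + θ ≤ n * Real.log k :=
    calc 1 + θ ≤ 1 * 2 := by linarith
      _ ≤ n * Real.log k := mul_le_mul hn' (two_le_log_natCast hk) (by norm_num) n.cast_nonneg
  calc entropyModulus d θ
      ≤ θ * (n * Real.log k) + Real.negMulLog (2 * θ) + θ * (n * Real.log k) := by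
        unfold entropyModulus
        gcongr
        · exact log_natCast_le_mul_log hd
        · exact negMulLog_le_negMulLog_of_le_exp_neg_one hθ0.le (by linarith) hθ
    _ = 2 * θ * n * Real.log k + Real.negMulLog (2 * θ) := by ring

variable {A B R : Type} [Fintype A] [DecidableEq A] [Fintype B] [DecidableEq B] [Fintype R]
  [DecidableEq R] {n : ℕ} {γA ωA γB ωB ωC : Type} [Fintype γA] [DecidableEq γA] [Fintype ωA]
  [Fintype γB] [DecidableEq γB] [Fintype ωB] [Fintype ωC]
  {φ : A × (B × R) → ℂ} {EA : Matrix (γA × ωA) (Fin n → A) ℂ}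
  {EB : Matrix (γB × ωB) (Fin n → B) ℂ}
  {D : Matrix (((Fin n → A) × (Fin n → B)) × ωC) (γA × γB) ℂ}

theorem mul_mutualInfo_le_of_codeFidelity (hφ : star φ ⬝ᵥ φ = 1) (hEA : EAᴴ * EA = 1)
    (hEB : EBᴴ * EB = 1) (hD : Dᴴ * D = 1) {θ : ℝ} (hθ0 : 0 < θ) (hθ : θ ≤ Real.exp (-1))
    (hF : 1 - θ ^ 2 / 3 ≤ codeFidelity φ EA EB D) :
    n * mutualInfo φ ≤ 2 * Real.log (Fintype.card γA) +
      entropyModulus (Fintype.card ωA * Fintype.card R ^ n) θ := by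
  rw [codeFidelity_eq] at hF
  have h := mutualInfo_le_of_fidelity hEA (jointDecoder_isometry hEB hD)
    (iidTensor_dotProduct_self hφ n) hθ0 hθ hF
  rwa [mutualInfo_iidTensor hφ, Fintype.card_prod, Fintype.card_fun, Fintype.card_fin] at h

theorem mul_mutualInfo_le_of_card_le (hφ : star φ ⬝ᵥ φ = 1)
    (hR : Fintype.card R ≤ Fintype.card A * Fintype.card B) (hn : 1 ≤ n) (hEA : EAᴴ * EA = 1)
    (hEB : EBᴴ * EB = 1) (hD : Dᴴ * D = 1) (hWA : Fintype.card ωA ≤ Fintype.card A ^ (2 * n))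
    {θ : ℝ} (hθ0 : 0 < θ) (hθ : 2 * θ ≤ Real.exp (-1))
    (hF : 1 - θ ^ 2 / 3 ≤ codeFidelity φ EA EB D) :
    n * mutualInfo φ ≤ 2 * Real.log (Fintype.card γA) +
      (2 * θ * n * Real.log ((Fintype.card A : ℝ) ^ 3 * Fintype.card B) +
        Real.negMulLog (2 * θ)) := by
  set k := Fintype.card A ^ 3 * Fintype.card B with hk_def
  have hk : (Fintype.card A : ℝ) ^ 3 * Fintype.card B = k := by
    rw [hk_def]
    push_cast
    rfl
  rw [hk]
  have hexp : Real.exp (-1) ≤ 1 := Real.exp_le_one_iff.mpr (by norm_num)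
  obtain ⟨⟨a, b, -⟩⟩ : Nonempty (A × (B × R)) := by
    by_contra! h
    simp [dotProduct] at hφ
  have hB : 1 ≤ Fintype.card B := Fintype.card_pos_iff.mpr ⟨b⟩
  have hA1 : 1 ≤ Fintype.card A := Fintype.card_pos_iff.mpr ⟨a⟩
  rcases hA1.eq_or_lt with hA | hA
  · have hI : mutualInfo φ ≤ 0 := by
      simpa [← hA] using mutualInfo_le_two_mul_log_card hφ
    have hη : 0 ≤ Real.negMulLog (2 * θ) :=
      Real.negMulLog_nonneg (by linarith) (hθ.trans hexp)
    exact (mul_nonpos_of_nonneg_of_nonpos n.cast_nonneg hI).trans (by positivity)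
  · have hdim : Fintype.card ωA * Fintype.card R ^ n ≤ k ^ n :=
      calc Fintype.card ωA * Fintype.card R ^ n
          ≤ Fintype.card A ^ (2 * n) * (Fintype.card A * Fintype.card B) ^ n := by gcongr
        _ = k ^ n := by rw [hk_def, pow_mul, ← mul_pow]; ring
    have hk8 : 8 ≤ k := by
      calc 8 = 2 ^ 3 * 1 := by norm_num
        _ ≤ k := Nat.mul_le_mul (Nat.pow_le_pow_left hA 3) hB
    have hcode := mul_mutualInfo_le_of_codeFidelity hφ hEA hEB hD hθ0 (by linarith) hF
    exact hcode.trans (by gcongr; exact entropyModulus_le hdim hk8 hn hθ0 hθ)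

lemma two_mul_sqrt_le_exp_neg_one {ε : ℝ} (hε0 : 0 ≤ ε) (hε : ε ≤ 1 / (12 * Real.exp 1 ^ 2)) :
    2 * Real.sqrt (3 * ε) ≤ Real.exp (-1) := by
  refine le_of_sq_le_sq ?_ (Real.exp_pos _).le
  calc (2 * Real.sqrt (3 * ε)) ^ 2 = 12 * ε := by
        rw [mul_pow, Real.sq_sqrt (by positivity)]
        ring
    _ ≤ 12 * (1 / (12 * Real.exp 1 ^ 2)) := by gcongr
    _ = Real.exp (-1) ^ 2 := by
        rw [Real.exp_neg]
        field_simp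

end Rate

/-- **Finite-blocklength converse for distributed compression (individual rate).**
For a distributed compression code on `n` copies of a pure state `φ^{ABR}` with
isometric encoders and decoder, `d_{W_A} ≤ d_A^{2n}`, `d_R ≤ d_A d_B`, and fidelity at
least `1 − ε` for some `0 < ε ≤ 1/(12e²)`,
`2 log₂ d_{C_A} ≥ n I(A;R)_φ − 2√(3ε) n log₂(d_A³ d_B) − η(2√(3ε))`
where `η(x) = −x log₂ x`. -/
theorem distributed_compression_rate_converse
    {ιA ιB ιR : Type} [Fintype ιA] [DecidableEq ιA] [Fintype ιB] [DecidableEq ιB]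
    [Fintype ιR] [DecidableEq ιR]
    {γA ωA γB ωB ωC : Type} [Fintype γA] [DecidableEq γA] [Fintype ωA] [DecidableEq ωA]
    [Fintype γB] [DecidableEq γB] [Fintype ωB] [DecidableEq ωB]
    [Fintype ωC] [DecidableEq ωC]
    (φ : ιA × (ιB × ιR) → ℂ) (hφ : star φ ⬝ᵥ φ = 1)
    (hdR : Fintype.card ιR ≤ Fintype.card ιA * Fintype.card ιB)
    (n : ℕ) (hn : 1 ≤ n)
    (EA : Matrix (γA × ωA) (Fin n → ιA) ℂ) (hEA : EAᴴ * EA = 1)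
    (EB : Matrix (γB × ωB) (Fin n → ιB) ℂ) (hEB : EBᴴ * EB = 1)
    (D : Matrix (((Fin n → ιA) × (Fin n → ιB)) × ωC) (γA × γB) ℂ) (hD : Dᴴ * D = 1)
    (hWA : Fintype.card ωA ≤ Fintype.card ιA ^ (2 * n))
    (ε : ℝ) (hε0 : 0 < ε) (hε1 : ε ≤ 1 / (12 * Real.exp 1 ^ 2))
    (hF : 1 - ε ≤ codeFidelity φ EA EB D) :
    2 * Real.logb 2 (Fintype.card γA) ≥
      (n : ℝ) * (vnEntropy (redA φ) + vnEntropy (redR φ) - vnEntropy (redAR φ))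
        - 2 * Real.sqrt (3 * ε) * (n : ℝ)
            * Real.logb 2 ((Fintype.card ιA : ℝ) ^ 3 * (Fintype.card ιB : ℝ))
        - (-(2 * Real.sqrt (3 * ε)) * Real.logb 2 (2 * Real.sqrt (3 * ε))) := by
  have hθ : Real.sqrt (3 * ε) ^ 2 / 3 = ε := by
    rw [Real.sq_sqrt (by positivity)]
    ring
  have hrate := mul_mutualInfo_le_of_card_le hφ hdR hn hEA hEB hD hWA
    (Real.sqrt_pos.mpr (by positivity)) (two_mul_sqrt_le_exp_neg_one hε0.le hε1) (hθ.symm ▸ hF)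
  have hbits := div_le_div_of_nonneg_right hrate (Real.log_nonneg one_le_two)
  rw [vnEntropy_redA_add_redR_sub_redAR hφ, ge_iff_le, ← sub_nonneg]
  refine (sub_nonneg.mpr hbits).trans_eq ?_
  unfold Real.logb Real.negMulLog
  ring
end
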